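/- Let 𝒲 be a Banach space with a Schauder basis (e_n) such that no infinite-dimensional closed subspace of 𝒲 is minimal. Then there exist a block subspace 𝒳 = [x_n] of 𝒲 and a countable ordinal α such that 𝒳 = [x_n] is α-tight. -/

import Mathlib

open Filter Topology

namespace Rosendal

variable {𝒲 : Type} [NormedAddCommGroup 𝒲] [NormedSpace ℝ 𝒲]

/-- `(e n)` is a Schauder basis of the Banach space `𝒲`: every vector has a unique
representation as a norm-convergent series `∑ a n • e n`. -/
def IsSchauderBasis (e : ℕ → 𝒲) : Prop :=
  ∀ x : 𝒲, ∃! a : ℕ → ℝ,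
    Tendsto (fun N => ∑ i ∈ Finset.range N, a i • e i) atTop (𝓝 x)

/-- `x` is a linear combination of the vectors `b i`, `i ∈ s`. -/
def SuppIn (b : ℕ → 𝒲) (x : 𝒲) (s : Finset ℕ) : Prop :=
  ∃ a : ℕ → ℝ, x = ∑ i ∈ s, a i • b i

/-- `(y n)` is a block sequence with respect to the basic sequence `(b n)`: a sequence of
nonzero finite linear combinations of the `b i` with successive supports. -/
def IsBlockSeq (b : ℕ → 𝒲) (y : ℕ → 𝒲) : Prop :=
  (∀ n, y n ≠ 0) ∧
  ∃ D : ℕ → Finset ℕ, (∀ n, SuppIn b (y n) (D n)) ∧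
    ∀ n, ∀ i ∈ D n, ∀ j ∈ D (n + 1), i < j

/-- The closed linear span of a set. -/
noncomputable def closedSpan (S : Set 𝒲) : Submodule ℝ 𝒲 :=
  (Submodule.span ℝ S).topologicalClosure

/-- `(x i)_{i<k} ∼_K (y i)_{i<k}`:
`(1/K)‖∑ a i • x i‖ ≤ ‖∑ a i • y i‖ ≤ K‖∑ a i • x i‖` for all scalars. -/
def SeqEquiv (K : ℝ) (k : ℕ) (x y : ℕ → 𝒲) : Prop :=
  ∀ a : ℕ → ℝ,
    (1 / K) * ‖∑ i ∈ Finset.range k, a i • x i‖ ≤ ‖∑ i ∈ Finset.range k, a i • y i‖ ∧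
    ‖∑ i ∈ Finset.range k, a i • y i‖ ≤ K * ‖∑ i ∈ Finset.range k, a i • x i‖

/-- The tree `T((x n), Y, K)` of finite sequences `(y 0, …, y k)` of vectors of `Y` that are
`K`-equivalent to `(x 0, …, x k)`, ordered by end-extension. -/
def embTree (x : ℕ → 𝒲) (Y : Set 𝒲) (K : ℝ) : Set (List 𝒲) :=
  {l | (∀ v ∈ l, v ∈ Y) ∧ SeqEquiv K l.length (fun i => l.getD i 0) x}

open Classical in
/-- The rank of a tree of finite sequences: if the proper end-extension relation is
well-founded (equivalently, for trees, there is no infinite branch), this is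
`sup { ρ(s) + 1 : s ∈ T }` where `ρ` is the usual rank function; otherwise it is `∞ = ⊤`. -/
noncomputable def treeRank (T : Set (List 𝒲)) : WithTop Ordinal :=
  if h : WellFounded (fun t s : T => s.val <+: t.val ∧ s.val ≠ t.val) then
    ((⨆ s : T, Order.succ ((h.apply s).rank) : Ordinal) : WithTop Ordinal)
  else ⊤

open Classical in
/-- The embeddability index `Emb((x n), Y) = sup_{K ≥ 1} rank T((x n), Y, K)`. -/
noncomputable def embIndex (x : ℕ → 𝒲) (Y : Set 𝒲) : WithTop Ordinal :=
  if ∃ K : ℝ, 1 ≤ K ∧ treeRank (embTree x Y K) = ⊤ then ⊤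
  else ((sSup {o : Ordinal | ∃ K : ℝ, 1 ≤ K ∧
      (o : WithTop Ordinal) = treeRank (embTree x Y K)} : Ordinal) : WithTop Ordinal)

/-- `(I m)` is a sequence of successive nonempty finite intervals `I 0 < I 1 < …` of `ℕ`. -/
def IntervalSeq (I : ℕ → Finset ℕ) : Prop :=
  (∀ m, ∃ a b : ℕ, a ≤ b ∧ I m = Finset.Icc a b) ∧
  ∀ m, ∀ i ∈ I m, ∀ j ∈ I (m + 1), i < j

/-- The closed subspace `[b n : n ∉ ⋃_{m ∈ A} I m]`. -/
noncomputable def residualSpace (b : ℕ → 𝒲) (I : ℕ → Finset ℕ) (A : Set ℕ) :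
    Submodule ℝ 𝒲 :=
  closedSpan {v | ∃ n : ℕ, (∀ m ∈ A, n ∉ I m) ∧ v = b n}

/-- The space `[b n]` with its basis `(b n)` is `α`-tight. -/
def IsAlphaTight (b : ℕ → 𝒲) (α : Ordinal) : Prop :=
  ∀ y : ℕ → 𝒲, IsBlockSeq b y →
    ∃ I : ℕ → Finset ℕ, IntervalSeq I ∧
      ∀ A : Set ℕ, A.Infinite →
        embIndex y (residualSpace b I A : Set 𝒲) ≤ (α : WithTop Ordinal)

/-- The space `[b n]` with its basis `(b n)` is `α`-minimal: every block subspace `[z n]`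
`α`-embeds into every infinite-dimensional subspace `Y ⊆ [b n]`. -/
def IsAlphaMinimal (b : ℕ → 𝒲) (α : Ordinal) : Prop :=
  ∀ z : ℕ → 𝒲, IsBlockSeq b z →
    ∀ Y : Submodule ℝ 𝒲, (Y : Set 𝒲) ⊆ (closedSpan (Set.range b) : Set 𝒲) →
      ¬FiniteDimensional ℝ Y →
        (α : WithTop Ordinal) ≤ embIndex z (Y : Set 𝒲)

/-- `X` embeds isomorphically into `Y` (as an isomorphism onto its image). -/
def LinIsoEmbeds (X Y : Submodule ℝ 𝒲) : Prop :=
  ∃ T : X →ₗ[ℝ] 𝒲, (∀ v : X, T v ∈ Y) ∧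
    ∃ c C : ℝ, 0 < c ∧ ∀ v : X, c * ‖v‖ ≤ ‖T v‖ ∧ ‖T v‖ ≤ C * ‖v‖

/-- `X` is a minimal space: it embeds isomorphically into every infinite-dimensional
closed subspace of itself. -/
def IsMinimalSpace (X : Submodule ℝ 𝒲) : Prop :=
  ∀ Y : Submodule ℝ 𝒲, Y ≤ X → IsClosed (Y : Set 𝒲) → ¬FiniteDimensional ℝ Y →
    LinIsoEmbeds X Y

/-- `F` embeds into `Y` with constant `K`. -/
def KEmbeds (K : ℝ) (F Y : Submodule ℝ 𝒲) : Prop :=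
  ∃ T : F →ₗ[ℝ] 𝒲, (∀ v : F, T v ∈ Y) ∧
    ∀ v : F, (1 / K) * ‖v‖ ≤ ‖T v‖ ∧ ‖T v‖ ≤ K * ‖v‖

end Rosendal

section
open Filter Topology
namespace Rosendal

/-- Package of basis data. -/
structure BData (𝒲 : Type) [NormedAddCommGroup 𝒲] [NormedSpace ℝ 𝒲] where
  e : ℕ → 𝒲
  P : ℕ → 𝒲 →L[ℝ] 𝒲
  B : ℝ
  hB : 1 ≤ B
  hPB : ∀ n x, ‖P n x‖ ≤ B * ‖x‖
  hPe : ∀ n j, P n (e j) = if j < n then e j else 0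
  e_ne : ∀ j, e j ≠ 0

section basis
variable {𝒲 : Type} [NormedAddCommGroup 𝒲] [NormedSpace ℝ 𝒲]

/-- partial sums space -/
def psSpace (e : ℕ → 𝒲) : Submodule ℝ C(OnePoint ℕ, 𝒲) where
  carrier := {f | f ((0 : ℕ) : OnePoint ℕ) = 0 ∧ ∀ n : ℕ,
    f ((n + 1 : ℕ) : OnePoint ℕ) - f ((n : ℕ) : OnePoint ℕ) ∈ Submodule.span ℝ {e n}}
  add_mem' := by
    rintro f g ⟨hf, hf'⟩ ⟨hg, hg'⟩
    refine ⟨by simp [hf, hg], fun n => ?_⟩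
    have := Submodule.add_mem _ (hf' n) (hg' n)
    simp only [ContinuousMap.add_apply]
    convert this using 1
    abel
  zero_mem' := by simp
  smul_mem' := by
    rintro c f ⟨hf, hf'⟩
    refine ⟨by simp [hf], fun n => ?_⟩
    have := Submodule.smul_mem _ c (hf' n)
    simpa [smul_sub] using this

theorem psSpace_closed (e : ℕ → 𝒲) : IsClosed (psSpace e : Set C(OnePoint ℕ, 𝒲)) := by
  have : (psSpace e : Set C(OnePoint ℕ, 𝒲)) = {f | f ((0 : ℕ) : OnePoint ℕ) = 0} ∩ ⋂ n : ℕ,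
    {f | f ((n + 1 : ℕ) : OnePoint ℕ) - f ((n : ℕ) : OnePoint ℕ) ∈
      (Submodule.span ℝ {e n} : Set 𝒲)} := by
    ext f; simp [psSpace]
  rw [this]
  refine IsClosed.inter (isClosed_eq (continuous_eval_const _) continuous_const) ?_
  refine isClosed_iInter fun n => ?_
  refine IsClosed.preimage (f := fun f : C(OnePoint ℕ, 𝒲) =>
    f ((n + 1 : ℕ) : OnePoint ℕ) - f ((n : ℕ) : OnePoint ℕ)) ?_ ?_
  · exact (continuous_eval_const _).sub (continuous_eval_const _)
  · exact Submodule.closed_of_finiteDimensional _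

theorem psSpace_sum {e : ℕ → 𝒲} {f : C(OnePoint ℕ, 𝒲)} (hf : f ∈ psSpace e) :
    ∃ a : ℕ → ℝ, ∀ n : ℕ, f (n : OnePoint ℕ) = ∑ i ∈ Finset.range n, a i • e i := by
  have : ∀ n, ∃ a : ℝ, a • e n = f ((n + 1 : ℕ) : OnePoint ℕ) - f ((n : ℕ) : OnePoint ℕ) :=
    fun n => Submodule.mem_span_singleton.1 (hf.2 n)
  choose a ha using this
  refine ⟨a, fun n => ?_⟩
  induction n with
  | zero => simpa using hf.1
  | succ n ih => rw [Finset.sum_range_succ, ← ih, ha]; abel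

theorem psSpace_tendsto (f : C(OnePoint ℕ, 𝒲)) :
    Tendsto (fun n : ℕ => f (n : OnePoint ℕ)) atTop (𝓝 (f OnePoint.infty)) := by
  have := (OnePoint.continuous_iff_from_nat f).1 f.continuous
  exact this

theorem psSpace_mk (e : ℕ → 𝒲) (a : ℕ → ℝ) (x : 𝒲)
    (h : Tendsto (fun N => ∑ i ∈ Finset.range N, a i • e i) atTop (𝓝 x)) :
    ∃ f ∈ psSpace e, f OnePoint.infty = x ∧
      ∀ n : ℕ, f (n : OnePoint ℕ) = ∑ i ∈ Finset.range n, a i • e i := by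
  let f := OnePoint.continuousMapMkNat (fun N => ∑ i ∈ Finset.range N, a i • e i) x h
  have h2 : ∀ n : ℕ, f (n : OnePoint ℕ) = ∑ i ∈ Finset.range n, a i • e i := fun n => rfl
  refine ⟨f, ⟨by rw [h2]; simp, fun n => ?_⟩, rfl, h2⟩
  rw [h2, h2, Finset.sum_range_succ]
  simp [Submodule.mem_span_singleton]

theorem exists_bdata [CompleteSpace 𝒲] (e : ℕ → 𝒲) (he : IsSchauderBasis e) :
    ∃ b : BData 𝒲, b.e = e := by
  haveI : CompleteSpace (psSpace e) := (psSpace_closed e).completeSpace_coe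
  let ev : C(OnePoint ℕ, 𝒲) →L[ℝ] 𝒲 := ContinuousMap.evalCLM ℝ OnePoint.infty
  let L : psSpace e →L[ℝ] 𝒲 := ev.comp (psSpace e).subtypeL
  have hL : ∀ f : psSpace e, L f = f.1 OnePoint.infty := fun f => rfl
  have huniq : ∀ f g : psSpace e, L f = L g → f = g := by
    intro f g hfg
    obtain ⟨a, ha⟩ := psSpace_sum f.2
    obtain ⟨b, hb⟩ := psSpace_sum g.2
    have h1 := psSpace_tendsto f.1
    have h2 := psSpace_tendsto g.1
    simp only [ha, hb] at h1 h2
    rw [← hL] at h1 h2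
    rw [hfg] at h1
    have := (he (L g)).unique h1 h2
    subst this
    apply Subtype.ext
    ext t
    induction t using OnePoint.rec with
    | infty => exact hfg
    | coe n => rw [ha, hb]
  have hker : LinearMap.ker (L : psSpace e →ₗ[ℝ] 𝒲) = ⊥ := by
    rw [LinearMap.ker_eq_bot]; exact fun f g h => huniq f g h
  have hran : LinearMap.range (L : psSpace e →ₗ[ℝ] 𝒲) = ⊤ := by
    rw [LinearMap.range_eq_top]
    intro x
    obtain ⟨a, ha, -⟩ := he x
    obtain ⟨f, hf, hfx, -⟩ := psSpace_mk e a x ha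
    exact ⟨⟨f, hf⟩, hfx⟩
  let E := ContinuousLinearEquiv.ofBijective L hker hran
  let Q : 𝒲 →L[ℝ] psSpace e := E.symm
  have hQ : ∀ f : psSpace e, Q (L f) = f := fun f => E.symm_apply_apply f
  refine ⟨⟨e, fun n => ((ContinuousMap.evalCLM ℝ (n : OnePoint ℕ)).comp
    (psSpace e).subtypeL).comp Q, max 1 ‖Q‖, le_max_left _ _, ?_, ?_, ?_⟩, rfl⟩
  · intro n x
    calc _ = ‖(Q x).1 (n : OnePoint ℕ)‖ := rfl
      _ ≤ ‖(Q x).1‖ := ContinuousMap.norm_coe_le_norm _ _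
      _ = ‖Q x‖ := rfl
      _ ≤ ‖Q‖ * ‖x‖ := Q.le_opNorm x
      _ ≤ _ := by gcongr; exact le_max_right _ _
  · intro n j
    have hs : ∀ N, ∑ i ∈ Finset.range N, (if i = j then (1 : ℝ) else 0) • e i
        = if j < N then e j else 0 := by
      intro N; simp [ite_smul, Finset.sum_ite_eq']
    have ht : Tendsto (fun N => ∑ i ∈ Finset.range N, (if i = j then (1 : ℝ) else 0) • e i)
        atTop (𝓝 (e j)) := by
      simp only [hs]
      refine tendsto_const_nhds.congr' ?_
      filter_upwards [eventually_gt_atTop j] with N hN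
      simp [hN]
    obtain ⟨f, hf, hfx, hfn⟩ := psSpace_mk e _ _ ht
    have : Q (e j) = ⟨f, hf⟩ := by rw [← hfx]; exact hQ ⟨f, hf⟩
    show (Q (e j)).1 (n : OnePoint ℕ) = _
    rw [this]
    show f _ = _
    rw [hfn, hs]
  · intro j hj
    have h1 : Tendsto (fun N => ∑ i ∈ Finset.range N, (0 : ℝ) • e i) atTop (𝓝 0) := by simp
    have h2 : Tendsto (fun N => ∑ i ∈ Finset.range N, (if i = j then (1 : ℝ) else 0) • e i)
        atTop (𝓝 0) := by simp [ite_smul, Finset.sum_ite_eq', hj]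
    have := (he 0).unique h1 h2
    have := congrFun this j
    simp at this

end basis
end Rosendal

end

section
open Filter Topology
namespace Rosendal

/-- countable scalar-dense set of finitely supported vectors -/
abbrev QD := ℕ →₀ ℚ

/-- vectors supported on `[n,∞)` -/
def Dn (n : ℕ) : Submodule ℚ QD where
  carrier := {d | ∀ i < n, d i = 0}
  add_mem' := by
    intro a b ha hb i hi
    simp [ha i hi, hb i hi]
  zero_mem' := by intro i _; rfl
  smul_mem' := by
    intro c a ha i hi
    simp [ha i hi]

theorem mem_Dn {n : ℕ} {d : QD} : d ∈ Dn n ↔ ∀ i < n, d i = 0 := Iff.rfl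

theorem Dn_anti {m n : ℕ} (h : m ≤ n) : Dn n ≤ Dn m := fun _ hd i hi => hd i (hi.trans_le h)

/-- upper bound for the support -/
def bd (d : QD) : ℕ := d.support.sup id + 1

theorem bd_spec {d : QD} {i : ℕ} (h : bd d ≤ i) : d i = 0 := by
  by_contra hne
  have : i ≤ d.support.sup id := Finset.le_sup (f := id) (Finsupp.mem_support_iff.2 hne)
  unfold bd at h
  omega

theorem lt_bd {d : QD} {n : ℕ} (h : d ∈ Dn n) (h0 : d ≠ 0) : n < bd d := by
  by_contra hlt
  apply h0
  ext i
  rcases lt_or_ge i n with hi | hi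
  · exact h i hi
  · exact bd_spec (by omega)

/-- fat subspaces -/
def Fat (M : Submodule ℚ QD) : Prop := ∀ n, ∃ d ∈ M, d ∈ Dn n ∧ d ≠ 0

theorem Fat.mono {M M' : Submodule ℚ QD} (h : Fat M) (hM : M ≤ M') : Fat M' := fun n => by
  obtain ⟨d, h1, h2⟩ := h n
  exact ⟨d, hM h1, h2⟩

theorem fat_top : Fat ⊤ := fun n => by
  refine ⟨Finsupp.single n 1, trivial, fun i hi => ?_, by simp⟩
  simp [Finsupp.single_apply]; omega

theorem Fat.inf_Dn {M : Submodule ℚ QD} (h : Fat M) (n : ℕ) : Fat (M ⊓ Dn n) := fun k => by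
  obtain ⟨d, h1, h2, h3⟩ := h (max n k)
  exact ⟨d, ⟨h1, Dn_anti (le_max_left _ _) h2⟩, Dn_anti (le_max_right _ _) h2, h3⟩

/-- block sequences of rational vectors -/
structure QBlock (z : ℕ → QD) : Prop where
  ne : ∀ k, z k ≠ 0
  succ : ∀ k, z (k + 1) ∈ Dn (bd (z k))

namespace QBlock
variable {z : ℕ → QD}

theorem bd_strictMono (hz : QBlock z) : StrictMono (fun k => bd (z k)) :=
  strictMono_nat_of_lt_succ fun k => lt_bd (hz.succ k) (hz.ne _)

theorem mem_Dn_lt (hz : QBlock z) {j k : ℕ} (h : j < k) : z k ∈ Dn (bd (z j)) := by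
  obtain ⟨k, rfl⟩ : ∃ k', k = k' + 1 := ⟨k - 1, by omega⟩
  exact Dn_anti (hz.bd_strictMono.monotone (by omega)) (hz.succ k)

theorem le_bd (hz : QBlock z) (k : ℕ) : k ≤ bd (z k) := hz.bd_strictMono.le_apply

theorem mem_Dn_self (hz : QBlock z) (k : ℕ) : z k ∈ Dn k := by
  cases k with
  | zero => intro i hi; omega
  | succ k =>
    refine Dn_anti ?_ (hz.succ k)
    have : 1 ≤ bd (z 0) := by unfold bd; omega
    have h2 : ∀ k, k + 1 ≤ bd (z k) := by
      intro k
      induction k with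
      | zero => exact this
      | succ k ih => have : bd (z k) < bd (z (k+1)) := hz.bd_strictMono (Nat.lt_succ_self k)
                     omega
    exact h2 k

theorem fat (hz : QBlock z) : Fat (Submodule.span ℚ (Set.range z)) := fun n =>
  ⟨z n, Submodule.subset_span ⟨n, rfl⟩, hz.mem_Dn_self n, hz.ne n⟩

theorem tail_aux (hz : QBlock z) (j : ℕ) {d : QD} (hd : d ∈ Submodule.span ℚ (z '' Set.Ici j))
    (hD : d ∈ Dn (bd (z j))) : d ∈ Submodule.span ℚ (z '' Set.Ici (j + 1)) := by
  have h1 : Set.Ici j = insert j (Set.Ici (j + 1)) := by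
    ext i; simp; omega
  rw [h1, Set.image_insert_eq, Submodule.mem_span_insert] at hd
  obtain ⟨c, d', hd', rfl⟩ := hd
  have hd'' : d' ∈ Dn (bd (z j)) := by
    refine (Submodule.span_le.2 ?_ : _ ≤ Dn (bd (z j))) hd'
    rintro _ ⟨k, hk, rfl⟩
    exact hz.mem_Dn_lt hk
  have h2 : c • z j ∈ Dn (bd (z j)) := by
    simpa using Submodule.sub_mem _ hD hd''
  have h3 : c • z j = 0 := by
    ext i
    rcases lt_or_ge i (bd (z j)) with hi | hi
    · exact h2 i hi
    · simp [bd_spec hi]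
  rw [h3, zero_add]; exact hd'

theorem tail (hz : QBlock z) (j : ℕ) {d : QD} (hd : d ∈ Submodule.span ℚ (Set.range z))
    (hD : d ∈ Dn (bd (z j))) : d ∈ Submodule.span ℚ (z '' Set.Ici (j + 1)) := by
  have : ∀ i ≤ j + 1, d ∈ Submodule.span ℚ (z '' Set.Ici i) := by
    intro i
    induction i with
    | zero =>
      intro _
      simpa [Set.image_univ] using hd
    | succ i ih =>
      intro hi
      exact hz.tail_aux i (ih (by omega))
        (Dn_anti (hz.bd_strictMono.monotone (by omega : i ≤ j)) hD)
  exact this _ le_rfl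

end QBlock

theorem exists_block (M : ℕ → Submodule ℚ QD) (hM : ∀ k, Fat (M k)) (g : ℕ → ℕ) :
    ∃ z : ℕ → QD, QBlock z ∧ ∀ k, z k ∈ M k ∧ z k ∈ Dn (g k) := by
  choose f hf using fun k n => hM k n
  let z : ℕ → QD := fun k => Nat.rec (f 0 (g 0)) (fun k zk => f (k + 1) (max (g (k + 1)) (bd zk))) k
  have h0 : z 0 = f 0 (g 0) := rfl
  have hs : ∀ k, z (k + 1) = f (k + 1) (max (g (k + 1)) (bd (z k))) := fun k => rfl
  refine ⟨z, ⟨fun k => ?_, fun k => ?_⟩, fun k => ?_⟩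
  · cases k with
    | zero => rw [h0]; exact (hf _ _).2.2
    | succ k => rw [hs]; exact (hf _ _).2.2
  · rw [hs]; exact Dn_anti (le_max_right _ _) (hf _ _).2.1
  · cases k with
    | zero => rw [h0]; exact ⟨(hf _ _).1, (hf _ _).2.1⟩
    | succ k => rw [hs]; exact ⟨(hf _ _).1, Dn_anti (le_max_left _ _) (hf _ _).2.1⟩

theorem fusion {σ : Type} [Countable σ] (X : Submodule ℚ QD) (hX : Fat X)
    (Q : σ → Submodule ℚ QD → Prop)
    (her : ∀ k M M', Fat M → Fat M' → (∃ n, M' ⊓ Dn n ≤ M) → Q k M → Q k M')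
    (dense : ∀ k, ∀ M ≤ X, Fat M → ∃ M' ≤ M, Fat M' ∧ Q k M') :
    ∃ X' ≤ X, Fat X' ∧ ∀ k, Q k X' := by
  rcases isEmpty_or_nonempty σ with hσ | hσ
  · exact ⟨X, le_rfl, hX, fun k => (hσ.false k).elim⟩
  obtain ⟨s, hs⟩ := exists_surjective_nat σ
  let S := {M : Submodule ℚ QD // M ≤ X ∧ Fat M}
  have hd : ∀ (k : ℕ) (M : S), ∃ M' : S, M'.1 ≤ M.1 ∧ Q (s k) M'.1 := by
    rintro k ⟨M, hM, hf⟩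
    obtain ⟨M', h1, h2, h3⟩ := dense (s k) M hM hf
    exact ⟨⟨M', h1.trans hM, h2⟩, h1, h3⟩
  choose F hF using hd
  let M : ℕ → S := fun k => Nat.rec (F 0 ⟨X, le_rfl, hX⟩) (fun k N => F (k + 1) N) k
  have hQ : ∀ k, Q (s k) (M k).1 := by
    intro k
    cases k with
    | zero => exact (hF _ _).2
    | succ k => exact (hF _ _).2
  have hdec : Antitone fun k => (M k).1 := antitone_nat_of_succ_le fun k => (hF _ _).1
  obtain ⟨z, hz, hzM⟩ := exists_block (fun k => (M k).1) (fun k => (M k).2.2) (fun _ => 0)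
  refine ⟨Submodule.span ℚ (Set.range z), ?_, hz.fat, fun t => ?_⟩
  · rw [Submodule.span_le]
    rintro _ ⟨k, rfl⟩
    exact (M k).2.1 (hzM k).1
  · obtain ⟨k, rfl⟩ := hs t
    refine her _ (M k).1 _ (M k).2.2 hz.fat ⟨bd (z k), ?_⟩ (hQ k)
    rintro d ⟨hd1, hd2⟩
    refine (Submodule.span_le.2 ?_ : _ ≤ (M k).1) (hz.tail k hd1 hd2)
    rintro _ ⟨j, hj, rfl⟩
    have : k + 1 ≤ j := hj
    exact hdec (by omega : k ≤ j) (hzM j).1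

section real
variable {𝒲 : Type} [NormedAddCommGroup 𝒲] [NormedSpace ℝ 𝒲]

/-- the embedding of rational vectors -/
noncomputable def BData.ι (b : BData 𝒲) (d : QD) : 𝒲 := d.sum fun i q => (q : ℝ) • b.e i

namespace BData
variable (b : BData 𝒲)

@[simp] theorem ι_zero : b.ι 0 = 0 := by simp [ι]

theorem ι_add (c d : QD) : b.ι (c + d) = b.ι c + b.ι d := by
  unfold ι
  rw [Finsupp.sum_add_index'] <;> intros <;> simp [add_smul]

theorem ι_smul (q : ℚ) (d : QD) : b.ι (q • d) = (q : ℝ) • b.ι d := by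
  unfold ι
  rw [Finsupp.sum_smul_index' (by simp), Finsupp.smul_sum]
  simp [mul_smul]

@[simp] theorem ι_single (i : ℕ) (q : ℚ) : b.ι (Finsupp.single i q) = (q : ℝ) • b.e i := by
  simp [ι]

theorem ι_eq_sum (d : QD) {n : ℕ} (h : ∀ i, n ≤ i → d i = 0) :
    b.ι d = ∑ i ∈ Finset.range n, (d i : ℝ) • b.e i := by
  unfold ι
  rw [Finsupp.sum_of_support_subset]
  · intro i hi
    rw [Finset.mem_range]
    by_contra hlt
    exact (Finsupp.mem_support_iff.1 hi) (h i (by omega))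
  · simp

theorem P_ι (n : ℕ) (d : QD) :
    b.P n (b.ι d) = d.sum fun i q => if i < n then (q : ℝ) • b.e i else 0 := by
  unfold ι
  rw [Finsupp.sum, map_sum, Finsupp.sum]
  refine Finset.sum_congr rfl fun i _ => ?_
  rw [map_smul, b.hPe]
  split_ifs <;> simp

theorem P_ι_Dn {n : ℕ} {d : QD} (h : d ∈ Dn n) : b.P n (b.ι d) = 0 := by
  rw [P_ι, Finsupp.sum]
  refine Finset.sum_eq_zero fun i hi => ?_
  rw [if_neg]
  intro hlt
  exact (Finsupp.mem_support_iff.1 hi) (h i hlt)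

theorem P_ι_bd {n : ℕ} {d : QD} (h : bd d ≤ n) : b.P n (b.ι d) = b.ι d := by
  rw [P_ι]
  unfold ι
  refine Finset.sum_congr rfl fun i hi => ?_
  refine if_pos ?_
  by_contra hlt
  exact (Finsupp.mem_support_iff.1 hi) (bd_spec (by omega))

theorem P_ι_diff (i : ℕ) (d : QD) : b.P (i + 1) (b.ι d) - b.P i (b.ι d) = (d i : ℝ) • b.e i := by
  rw [P_ι, P_ι, ← Finsupp.sum_sub]
  have : ∀ j (q : ℚ), ((if j < i + 1 then (q : ℝ) • b.e j else 0) - if j < i then (q:ℝ) • b.e j else 0)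
     = if j = i then (q : ℝ) • b.e j else 0 := by
    intro j q
    by_cases h1 : j < i
    · rw [if_pos (by omega), if_pos h1, if_neg (by omega), sub_self]
    · by_cases h2 : j = i
      · rw [if_pos (by omega), if_neg h1, if_pos h2, sub_zero]
      · rw [if_neg (by omega), if_neg h1, if_neg h2, sub_zero]
  simp only [this]
  rw [Finsupp.sum, Finset.sum_ite_eq']
  split_ifs with h
  · rfl
  · simp [Finsupp.notMem_support_iff.1 h]

theorem ι_ne {d : QD} (h : d ≠ 0) : b.ι d ≠ 0 := by
  intro h0
  apply h
  ext i
  have := b.P_ι_diff i d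
  rw [h0] at this
  simp only [map_zero, sub_zero] at this
  have := (smul_eq_zero.1 this.symm).resolve_right (b.e_ne i)
  exact_mod_cast this

/-- a sequence of vectors which is a block with boundaries `m`. -/
def Blk (y : ℕ → 𝒲) (m : ℕ → ℕ) : Prop := ∀ k j, b.P (m k) (y j) = if j < k then y j else 0

theorem Blk_e : b.Blk b.e id := fun k j => b.hPe k j

/-- boundaries -/
def _root_.Rosendal.bdry (z : ℕ → QD) (k : ℕ) : ℕ := Nat.casesOn k 0 (fun k => bd (z k))

theorem Blk_ι {z : ℕ → QD} (hz : QBlock z) : b.Blk (fun k => b.ι (z k)) (bdry z) := by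
  intro k j
  cases k with
  | zero =>
    rw [if_neg (by omega)]
    exact b.P_ι_Dn (n := 0) (fun i hi => by omega)
  | succ k =>
    show b.P (bd (z k)) _ = _
    split_ifs with h
    · exact b.P_ι_bd (hz.bd_strictMono.monotone (by omega))
    · exact b.P_ι_Dn (hz.mem_Dn_lt (by omega))

theorem Blk.coeff {y : ℕ → 𝒲} {m : ℕ → ℕ} (h : b.Blk y m) (a : ℕ → ℝ) (n k : ℕ) (hk : k < n) :
    |a k| * ‖y k‖ ≤ 2 * b.B * ‖∑ i ∈ Finset.range n, a i • y i‖ := by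
  set w := ∑ i ∈ Finset.range n, a i • y i
  have h1 : ∀ k ≤ n, b.P (m k) w = ∑ i ∈ Finset.range k, a i • y i := by
    intro k hk
    simp only [w, map_sum, map_smul, h k]
    rw [← Finset.sum_subset (Finset.range_mono hk)]
    · refine Finset.sum_congr rfl fun i hi => ?_
      rw [if_pos (Finset.mem_range.1 hi)]
    · intro i _ hi
      rw [if_neg (by simpa using hi), smul_zero]
  have h2 : a k • y k = b.P (m (k + 1)) w - b.P (m k) w := by
    rw [h1 _ hk, h1 _ hk.le, Finset.sum_range_succ]; abel
  calc |a k| * ‖y k‖ = ‖a k • y k‖ := by rw [norm_smul, Real.norm_eq_abs]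
    _ ≤ ‖b.P (m (k + 1)) w‖ + ‖b.P (m k) w‖ := by rw [h2]; exact norm_sub_le _ _
    _ ≤ b.B * ‖w‖ + b.B * ‖w‖ := add_le_add (b.hPB _ _) (b.hPB _ _)
    _ = _ := by ring

theorem Blk.perturb {y y' : ℕ → 𝒲} {m : ℕ → ℕ} (h : b.Blk y m) (η : ℝ) (hη : 0 ≤ η)
    (hyy : ∀ k, ‖y k - y' k‖ ≤ η / (2 * b.B) * ‖y k‖ * (1 / 2) ^ (k + 1)) (a : ℕ → ℝ) (n : ℕ) :
    ‖∑ i ∈ Finset.range n, a i • y i - ∑ i ∈ Finset.range n, a i • y' i‖ ≤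
      η * ‖∑ i ∈ Finset.range n, a i • y i‖ := by
  have hB := b.hB
  set w := ∑ i ∈ Finset.range n, a i • y i with hw
  have hgeom : ∀ n, ∑ i ∈ Finset.range n, (1 / 2 : ℝ) ^ (i + 1) ≤ 1 := by
    intro n
    have : ∑ i ∈ Finset.range n, (1 / 2 : ℝ) ^ (i + 1) = 1 - (1 / 2) ^ n := by
      induction n with
      | zero => simp
      | succ n ih => rw [Finset.sum_range_succ, ih]; ring
    rw [this]
    have : (0 : ℝ) ≤ (1 / 2) ^ n := by positivity
    linarith
  calc _ = ‖∑ i ∈ Finset.range n, a i • (y i - y' i)‖ := by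
        rw [hw, ← Finset.sum_sub_distrib]; simp only [smul_sub]
    _ ≤ ∑ i ∈ Finset.range n, ‖a i • (y i - y' i)‖ := norm_sum_le _ _
    _ ≤ ∑ i ∈ Finset.range n, (η * ‖w‖) * (1 / 2) ^ (i + 1) := by
        refine Finset.sum_le_sum fun i hi => ?_
        rw [norm_smul, Real.norm_eq_abs]
        have h1 := h.coeff b a n i (Finset.mem_range.1 hi)
        rw [← hw] at h1
        calc |a i| * ‖y i - y' i‖ ≤ |a i| * (η / (2 * b.B) * ‖y i‖ * (1 / 2) ^ (i + 1)) := by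
              gcongr; exact hyy i
          _ = η / (2 * b.B) * (1 / 2) ^ (i + 1) * (|a i| * ‖y i‖) := by ring
          _ ≤ η / (2 * b.B) * (1 / 2) ^ (i + 1) * (2 * b.B * ‖w‖) := by gcongr
          _ = _ := by field_simp
    _ = (η * ‖w‖) * ∑ i ∈ Finset.range n, (1 / 2) ^ (i + 1) := by rw [Finset.mul_sum]
    _ ≤ (η * ‖w‖) * 1 := by gcongr; exact hgeom n
    _ = _ := mul_one _

theorem Blk.equiv {y y' : ℕ → 𝒲} {m : ℕ → ℕ} (h : b.Blk y m) (hne : ∀ k, y k ≠ 0) (n : ℕ) :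
    ∃ C : ℝ, 0 ≤ C ∧ ∀ a : ℕ → ℝ, ‖∑ i ∈ Finset.range n, a i • y' i‖ ≤
      C * ‖∑ i ∈ Finset.range n, a i • y i‖ := by
  have hB := b.hB
  refine ⟨∑ i ∈ Finset.range n, 2 * b.B * (‖y' i‖ / ‖y i‖),
    Finset.sum_nonneg fun i _ => by positivity, fun a => ?_⟩
  refine (norm_sum_le _ _).trans ?_
  rw [Finset.sum_mul]
  refine Finset.sum_le_sum fun i hi => ?_
  have h1 := h.coeff b a n i (Finset.mem_range.1 hi)
  have h2 : 0 < ‖y i‖ := norm_pos_iff.2 (hne i)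
  rw [norm_smul, Real.norm_eq_abs]
  calc |a i| * ‖y' i‖ = (|a i| * ‖y i‖) * (‖y' i‖ / ‖y i‖) := by field_simp
    _ ≤ (2 * b.B * ‖∑ i ∈ Finset.range n, a i • y i‖) * (‖y' i‖ / ‖y i‖) := by gcongr
    _ = _ := by ring

end BData
end real
end Rosendal

end

section
open Filter Topology
namespace Rosendal
section real
variable {𝒲 : Type} [NormedAddCommGroup 𝒲] [NormedSpace ℝ 𝒲]

theorem mem_span_range_iff' {E : Type} [AddCommGroup E] [Module ℝ E] (f : ℕ → E) (w : E) :
    w ∈ Submodule.span ℝ (Set.range f) ↔ ∃ (n : ℕ) (a : ℕ → ℝ),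
      w = ∑ i ∈ Finset.range n, a i • f i := by
  constructor
  · intro h
    rw [Finsupp.mem_span_range_iff_exists_finsupp] at h
    obtain ⟨c, rfl⟩ := h
    refine ⟨c.support.sup id + 1, c, ?_⟩
    rw [Finsupp.sum_of_support_subset]
    · intro i hi
      rw [Finset.mem_range]
      exact Nat.lt_succ_of_le (Finset.le_sup (f := id) hi)
    · simp
  · rintro ⟨n, a, rfl⟩
    exact Submodule.sum_mem _ fun i _ => Submodule.smul_mem _ _ (Submodule.subset_span ⟨i, rfl⟩)

theorem mem_span_Iio_iff {E : Type} [AddCommGroup E] [Module ℝ E] (f : ℕ → E) (N : ℕ) (w : E) :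
    w ∈ Submodule.span ℝ (f '' Set.Iio N) → ∃ (a : ℕ → ℝ),
      w = ∑ i ∈ Finset.range N, a i • f i := by
  intro h
  induction h using Submodule.span_induction with
  | mem x hx =>
    obtain ⟨i, hi, rfl⟩ := hx
    refine ⟨fun j => if j = i then 1 else 0, ?_⟩
    simp only [ite_smul, one_smul, zero_smul]
    rw [Finset.sum_ite_eq', if_pos (Finset.mem_range.2 hi)]
  | zero => exact ⟨0, by simp⟩
  | add x y _ _ hx hy =>
    obtain ⟨a, rfl⟩ := hx
    obtain ⟨c, rfl⟩ := hy
    exact ⟨a + c, by simp [add_smul, Finset.sum_add_distrib]⟩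
  | smul r x _ hx =>
    obtain ⟨a, rfl⟩ := hx
    exact ⟨r • a, by simp [mul_smul, Finset.smul_sum]⟩

theorem LinIsoEmbeds.trans {X Y Z : Submodule ℝ 𝒲} (h1 : LinIsoEmbeds X Y)
    (h2 : LinIsoEmbeds Y Z) : LinIsoEmbeds X Z := by
  obtain ⟨T, hT, c, C, hc, hTb⟩ := h1
  obtain ⟨S, hS, d, D, hd, hSb⟩ := h2
  refine ⟨S.comp (T.codRestrict Y hT), fun v => hS _, d * c, |D| * C, by positivity, fun v => ?_⟩
  have h3 := hSb (T.codRestrict Y hT v)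
  have h4 := hTb v
  have h5 : ‖T.codRestrict Y hT v‖ = ‖T v‖ := rfl
  rw [h5] at h3
  constructor
  · calc d * c * ‖v‖ = d * (c * ‖v‖) := by ring
      _ ≤ d * ‖T v‖ := by gcongr; exact h4.1
      _ ≤ _ := h3.1
  · calc _ ≤ D * ‖T v‖ := h3.2
      _ ≤ |D| * ‖T v‖ := by gcongr; exact le_abs_self D
      _ ≤ |D| * (C * ‖v‖) := by gcongr; exact h4.2
      _ = _ := by ring

theorem LinIsoEmbeds.mono {X Y Z : Submodule ℝ 𝒲} (h1 : LinIsoEmbeds X Y)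
    (h : Y ≤ Z) : LinIsoEmbeds X Z := by
  obtain ⟨T, hT, r⟩ := h1
  exact ⟨T, fun v => h (hT v), r⟩

theorem lemmaE [CompleteSpace 𝒲] (R : Submodule ℝ (𝒲 × 𝒲)) (C : ℝ)
    (hR : ∀ w ∈ R, ‖w.1‖ ≤ C * ‖w.2‖ ∧ ‖w.2‖ ≤ C * ‖w.1‖) (S : Set 𝒲) (V : Submodule ℝ 𝒲)
    (hV : IsClosed (V : Set 𝒲)) (hS : ∀ s ∈ S, ∃ v ∈ V, (s, v) ∈ R) :
    LinIsoEmbeds (closedSpan S) V := by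
  obtain ⟨C', hC'0, hCC⟩ : ∃ C' : ℝ, 0 < C' ∧ C ≤ C' := ⟨max C 1, by positivity, le_max_left _ _⟩
  let R1 : Submodule ℝ (𝒲 × 𝒲) := (R ⊓ (⊤ : Submodule ℝ 𝒲).prod V).topologicalClosure
  have hR1V : ∀ w ∈ R1, w.2 ∈ V := by
    intro w hw
    have : R1 ≤ (⊤ : Submodule ℝ 𝒲).prod V := by
      refine Submodule.topologicalClosure_minimal _ inf_le_right ?_
      rw [Submodule.prod_coe]
      exact isClosed_univ.prod hV
    exact (this hw).2
  have hR1 : ∀ w ∈ R1, ‖w.1‖ ≤ C' * ‖w.2‖ ∧ ‖w.2‖ ≤ C' * ‖w.1‖ := by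
    intro w hw
    have hcl : IsClosed {w : 𝒲 × 𝒲 | ‖w.1‖ ≤ C' * ‖w.2‖ ∧ ‖w.2‖ ≤ C' * ‖w.1‖} := by
      apply IsClosed.inter
      · exact isClosed_le (f := fun w : 𝒲 × 𝒲 => ‖w.1‖) (g := fun w => C' * ‖w.2‖)
          (by fun_prop) (by fun_prop)
      · exact isClosed_le (f := fun w : 𝒲 × 𝒲 => ‖w.2‖) (g := fun w => C' * ‖w.1‖)
          (by fun_prop) (by fun_prop)
    have hsub : ((R ⊓ (⊤ : Submodule ℝ 𝒲).prod V : Submodule ℝ (𝒲 × 𝒲)) : Set (𝒲 × 𝒲)) ⊆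
        {w : 𝒲 × 𝒲 | ‖w.1‖ ≤ C' * ‖w.2‖ ∧ ‖w.2‖ ≤ C' * ‖w.1‖} := by
      rintro w ⟨hw, -⟩
      obtain ⟨h1, h2⟩ := hR w hw
      exact ⟨h1.trans (by gcongr), h2.trans (by gcongr)⟩
    exact closure_minimal hsub hcl hw
  have hcR1 : IsClosed (R1 : Set (𝒲 × 𝒲)) := Submodule.isClosed_topologicalClosure _
  have : CompleteSpace R1 := hcR1.completeSpace_coe
  let F : R1 →L[ℝ] 𝒲 := (ContinuousLinearMap.fst ℝ 𝒲 𝒲).comp R1.subtypeL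
  have hF : ∀ w : R1, F w = w.1.1 := fun _ => rfl
  have hFb : ∀ w : R1, ‖w‖ ≤ (max 1 C') * ‖F w‖ := by
    intro w
    rw [hF]
    have : ‖w‖ = max ‖w.1.1‖ ‖w.1.2‖ := rfl
    rw [this]
    have h2 := (hR1 _ w.2).2
    refine max_le ?_ (h2.trans (by gcongr; exact le_max_right _ _))
    calc ‖w.1.1‖ = 1 * ‖w.1.1‖ := (one_mul _).symm
      _ ≤ _ := by gcongr; exact le_max_left _ _
  have hanti : AntilipschitzWith (Real.toNNReal (max 1 C')) F := by
    refine AddMonoidHomClass.antilipschitz_of_bound F (fun w => ?_)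
    rw [Real.coe_toNNReal _ (by positivity)]
    exact hFb w
  have hclosed : IsClosed (Set.range F) := hanti.isClosed_range F.uniformContinuous
  have hinj : Function.Injective (F : R1 →ₗ[ℝ] 𝒲) := hanti.injective
  let G := LinearEquiv.ofInjective (F : R1 →ₗ[ℝ] 𝒲) hinj
  have hle : closedSpan S ≤ LinearMap.range (F : R1 →ₗ[ℝ] 𝒲) := by
    refine Submodule.topologicalClosure_minimal _ ?_ ?_
    · rw [Submodule.span_le]
      intro s hs
      obtain ⟨v, hv, hsv⟩ := hS s hs
      exact ⟨⟨(s, v), Submodule.le_topologicalClosure _ ⟨hsv, trivial, hv⟩⟩, rfl⟩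
    · exact hclosed
  let T : closedSpan S →ₗ[ℝ] 𝒲 := (LinearMap.snd ℝ 𝒲 𝒲).comp
    (R1.subtype.comp (G.symm.toLinearMap.comp (Submodule.inclusion hle)))
  have hT : ∀ v : closedSpan S, ∃ w : R1, w.1.1 = v ∧ T v = w.1.2 := by
    intro v
    refine ⟨G.symm (Submodule.inclusion hle v), ?_, rfl⟩
    have := G.apply_symm_apply (Submodule.inclusion hle v)
    exact congrArg Subtype.val this
  refine ⟨T, fun v => ?_, 1 / C', C', by positivity, fun v => ?_⟩
  · obtain ⟨w, h1, h2⟩ := hT v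
    rw [h2]; exact hR1V _ w.2
  · obtain ⟨w, h1, h2⟩ := hT v
    have h3 := hR1 _ w.2
    rw [h2]
    have h4 : ‖v‖ = ‖w.1.1‖ := by rw [h1]; rfl
    rw [h4]
    refine ⟨?_, h3.2⟩
    rw [one_div, inv_mul_le_iff₀ hC'0]; exact h3.1

namespace BData
variable (b : BData 𝒲)

theorem lemmaF_aux {g h : ℕ → 𝒲} {m : ℕ → ℕ} (hg : b.Blk g m)
    (hg0 : ∀ k, g k ≠ 0) (N n0 : ℕ) (hn0 : ∀ i < N, b.P n0 (g i) = g i) :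
    ∃ C : ℝ, 0 ≤ C ∧ ∀ (a : ℕ → ℝ) (s : 𝒲), b.P n0 s = 0 →
      ‖∑ i ∈ Finset.range N, a i • h i + s‖ ≤ C * ‖∑ i ∈ Finset.range N, a i • g i + s‖ := by
  obtain ⟨C, hC0, hC⟩ := hg.equiv b (y' := h) hg0 N
  have hB := b.hB
  refine ⟨C * b.B + (1 + b.B), by positivity, fun a s hs => ?_⟩
  set u := ∑ i ∈ Finset.range N, a i • g i with hu
  have h1 : b.P n0 (u + s) = u := by
    rw [map_add, hs, add_zero, hu, map_sum]
    refine Finset.sum_congr rfl fun i hi => ?_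
    rw [map_smul, hn0 i (Finset.mem_range.1 hi)]
  have h2 : ‖u‖ ≤ b.B * ‖u + s‖ := by
    conv_lhs => rw [← h1]
    exact b.hPB _ _
  have h3 : ‖s‖ ≤ ‖u + s‖ + ‖u‖ := by
    have : s = (u + s) - u := by abel
    conv_lhs => rw [this]
    exact norm_sub_le _ _
  calc _ ≤ ‖∑ i ∈ Finset.range N, a i • h i‖ + ‖s‖ := norm_add_le _ _
    _ ≤ C * ‖u‖ + ‖s‖ := by gcongr; exact hC a
    _ ≤ C * (b.B * ‖u + s‖) + (‖u + s‖ + b.B * ‖u + s‖) := by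
        gcongr
        exact h3.trans (by gcongr)
    _ = _ := by ring

theorem lemmaF [CompleteSpace 𝒲] {g h : ℕ → 𝒲} {m m' : ℕ → ℕ} (hg : b.Blk g m) (hh : b.Blk h m')
    (hg0 : ∀ k, g k ≠ 0) (hh0 : ∀ k, h k ≠ 0) (N n0 n1 : ℕ)
    (hn0 : ∀ i < N, b.P n0 (g i) = g i) (hn1 : ∀ i < N, b.P n1 (h i) = h i) (S : Set 𝒲)
    (hS : ∀ s ∈ S, b.P n0 s = 0 ∧ b.P n1 s = 0) :
    LinIsoEmbeds (closedSpan (g '' Set.Iio N ∪ S)) (closedSpan (h '' Set.Iio N ∪ S)) := by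
  obtain ⟨C, hC0, hC⟩ := b.lemmaF_aux (h := h) hg hg0 N n0 hn0
  obtain ⟨C', hC0', hC'⟩ := b.lemmaF_aux (h := g) hh hh0 N n1 hn1
  let f : ℕ → 𝒲 × 𝒲 := fun i => (g i, h i)
  let R : Submodule ℝ (𝒲 × 𝒲) := Submodule.span ℝ (f '' Set.Iio N) ⊔
    (Submodule.span ℝ S).map ((LinearMap.id : 𝒲 →ₗ[ℝ] 𝒲).prod LinearMap.id)
  have hP : ∀ s ∈ Submodule.span ℝ S, b.P n0 s = 0 ∧ b.P n1 s = 0 := by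
    intro s hs
    have : Submodule.span ℝ S ≤ LinearMap.ker (b.P n0 : 𝒲 →ₗ[ℝ] 𝒲) ⊓
        LinearMap.ker (b.P n1 : 𝒲 →ₗ[ℝ] 𝒲) := by
      rw [Submodule.span_le]; exact fun s hs => hS s hs
    exact this hs
  refine lemmaE R (max C C') ?_ _ _ (Submodule.isClosed_topologicalClosure _) ?_
  · intro w hw
    obtain ⟨p, hp, q, hq, rfl⟩ := Submodule.mem_sup.1 hw
    obtain ⟨s, hs, rfl⟩ := hq
    obtain ⟨a, rfl⟩ := mem_span_Iio_iff f N p hp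
    have e1 : (∑ i ∈ Finset.range N, a i • f i).1 = ∑ i ∈ Finset.range N, a i • g i := by
      simp [f, Prod.fst_sum]
    have e2 : (∑ i ∈ Finset.range N, a i • f i).2 = ∑ i ∈ Finset.range N, a i • h i := by
      simp [f, Prod.snd_sum]
    simp only [Prod.fst_add, Prod.snd_add, e1, e2]
    have := hP s hs
    constructor
    · refine (hC' a s this.2).trans ?_
      gcongr
      · exact le_max_right _ _
      · rfl
    · refine (hC a s this.1).trans ?_
      gcongr
      · exact le_max_left _ _
      · rfl
  · rintro s (⟨i, hi, rfl⟩ | hs)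
    · exact ⟨h i, Submodule.le_topologicalClosure _ (Submodule.subset_span (Or.inl ⟨i, hi, rfl⟩)),
        Submodule.mem_sup_left (Submodule.subset_span ⟨i, hi, rfl⟩)⟩
    · exact ⟨s, Submodule.le_topologicalClosure _ (Submodule.subset_span (Or.inr hs)),
        Submodule.mem_sup_right ⟨s, Submodule.subset_span hs, rfl⟩⟩

end BData
end real
end Rosendal

end

section
open Filter Topology
namespace Rosendal

theorem exists_block' (p : ℕ → QD → Prop) (hp : ∀ k n, ∃ d, d ∈ Dn n ∧ d ≠ 0 ∧ p k d) :
    ∃ z : ℕ → QD, QBlock z ∧ ∀ k, p k (z k) := by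
  choose f hf using hp
  let z : ℕ → QD := fun k => Nat.rec (f 0 0) (fun k zk => f (k + 1) (bd zk)) k
  have hs : ∀ k, z (k + 1) = f (k + 1) (bd (z k)) := fun k => rfl
  refine ⟨z, ⟨fun k => ?_, fun k => ?_⟩, fun k => ?_⟩
  · cases k with
    | zero => exact (hf _ _).2.1
    | succ k => rw [hs]; exact (hf _ _).2.1
  · rw [hs]; exact (hf _ _).1
  · cases k with
    | zero => exact (hf _ _).2.2
    | succ k => rw [hs]; exact (hf _ _).2.2

section real
variable {𝒲 : Type} [NormedAddCommGroup 𝒲] [NormedSpace ℝ 𝒲]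
namespace BData
variable (b : BData 𝒲)

theorem ι_neg (d : QD) : b.ι (-d) = - b.ι d := by
  have := b.ι_smul (-1) d
  simpa using this

theorem ι_sub (c d : QD) : b.ι (c - d) = b.ι c - b.ι d := by
  rw [sub_eq_add_neg, ι_add, ι_neg, sub_eq_add_neg]

theorem ι_mem_span {S : Set QD} {d : QD} (hd : d ∈ Submodule.span ℚ S) :
    b.ι d ∈ Submodule.span ℝ (b.ι '' S) := by
  induction hd using Submodule.span_induction with
  | mem x hx => exact Submodule.subset_span ⟨x, hx, rfl⟩
  | zero => simp
  | add x y _ _ hx hy => rw [ι_add]; exact Submodule.add_mem _ hx hy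
  | smul r x _ hx => rw [ι_smul]; exact Submodule.smul_mem _ _ hx

theorem dense_approx {S : Set QD} {v : 𝒲} (hv : v ∈ closedSpan (b.ι '' S)) {δ : ℝ} (hδ : 0 < δ) :
    ∃ d ∈ Submodule.span ℚ S, ‖v - b.ι d‖ < δ := by
  have h1 : ∀ v ∈ Submodule.span ℝ (b.ι '' S), ∀ δ : ℝ, 0 < δ →
      ∃ d ∈ Submodule.span ℚ S, ‖v - b.ι d‖ < δ := by
    intro v hv
    induction hv using Submodule.span_induction with
    | mem x hx =>
      obtain ⟨d, hd, rfl⟩ := hx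
      intro δ hδ
      exact ⟨d, Submodule.subset_span hd, by simpa using hδ⟩
    | zero => exact fun δ hδ => ⟨0, Submodule.zero_mem _, by simpa using hδ⟩
    | add x y _ _ hx hy =>
      intro δ hδ
      obtain ⟨c, hc, hc'⟩ := hx (δ / 2) (by positivity)
      obtain ⟨d, hd, hd'⟩ := hy (δ / 2) (by positivity)
      refine ⟨c + d, Submodule.add_mem _ hc hd, ?_⟩
      rw [ι_add, add_sub_add_comm]
      exact (norm_add_le _ _).trans_lt (by linarith)
    | smul r x _ hx =>
      intro δ hδ
      obtain ⟨d, hd, hd'⟩ := hx (δ / (2 * (|r| + 1))) (by positivity)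
      have h2 : 0 < δ / (2 * (‖b.ι d‖ + 1)) := by positivity
      obtain ⟨q, hq1, hq2⟩ := exists_rat_btwn (show r < r + δ / (2 * (‖b.ι d‖ + 1)) by linarith)
      refine ⟨q • d, Submodule.smul_mem _ _ hd, ?_⟩
      rw [ι_smul]
      have h3 : r • x - (q : ℝ) • b.ι d = r • (x - b.ι d) + (r - q) • b.ι d := by
        rw [smul_sub, sub_smul]; abel
      rw [h3]
      have h4 : ‖r • (x - b.ι d)‖ < δ / 2 := by
        rw [norm_smul, Real.norm_eq_abs]
        calc |r| * ‖x - b.ι d‖ ≤ (|r| + 1) * ‖x - b.ι d‖ := by gcongr; linarith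
          _ < (|r| + 1) * (δ / (2 * (|r| + 1))) := by gcongr
          _ = δ / 2 := by field_simp
      have h5 : ‖(r - q) • b.ι d‖ ≤ δ / 2 := by
        rw [norm_smul, Real.norm_eq_abs, abs_sub_comm, abs_of_nonneg (by linarith)]
        calc ((q : ℝ) - r) * ‖b.ι d‖ ≤ (δ / (2 * (‖b.ι d‖ + 1))) * (‖b.ι d‖ + 1) := by
              gcongr <;> linarith
          _ = δ / 2 := by field_simp
      exact (norm_add_le _ _).trans_lt (by linarith)
  have h2 : v ∈ closure (Submodule.span ℝ (b.ι '' S) : Set 𝒲) := hv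
  obtain ⟨w, hw, hvw⟩ := Metric.mem_closure_iff.1 h2 (δ / 2) (by positivity)
  obtain ⟨d, hd, hd'⟩ := h1 w hw (δ / 2) (by positivity)
  refine ⟨d, hd, ?_⟩
  rw [dist_eq_norm] at hvw
  calc ‖v - b.ι d‖ = ‖(v - w) + (w - b.ι d)‖ := by congr 1; abel
    _ < δ := (norm_add_le _ _).trans_lt (by linarith)

theorem split {y : ℕ → QD} (hy : QBlock y) (j : ℕ) {d : QD}
    (hd : d ∈ Submodule.span ℚ (Set.range y)) :
    ∃ d1 ∈ Submodule.span ℚ (y '' Set.Iic j), ∃ d2 ∈ Submodule.span ℚ (Set.range y),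
      d2 ∈ Dn (bd (y j)) ∧ d = d1 + d2 ∧ b.P (bd (y j)) (b.ι d) = b.ι d1 := by
  have h1 : Set.range y = y '' Set.Iic j ∪ y '' Set.Ici (j + 1) := by
    rw [← Set.image_union, ← Set.image_univ]
    congr 1
    ext i; simp; omega
  have hd0 := hd
  rw [h1, Submodule.span_union, Submodule.mem_sup] at hd
  obtain ⟨d1, hd1, d2, hd2, rfl⟩ := hd
  have h2 : d2 ∈ Dn (bd (y j)) := by
    refine (Submodule.span_le.2 ?_ : _ ≤ Dn (bd (y j))) hd2
    rintro _ ⟨k, hk, rfl⟩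
    exact hy.mem_Dn_lt hk
  refine ⟨d1, hd1, d2, Submodule.span_mono (Set.image_subset_range _ _) hd2, h2, rfl, ?_⟩
  rw [ι_add, map_add, b.P_ι_Dn h2, add_zero]
  have h3 : ∀ d ∈ Submodule.span ℚ (y '' Set.Iic j), b.P (bd (y j)) (b.ι d) = b.ι d := by
    intro d hd
    induction hd using Submodule.span_induction with
    | mem x hx =>
      obtain ⟨i, hi, rfl⟩ := hx
      exact b.P_ι_bd (hy.bd_strictMono.monotone hi)
    | zero => simp
    | add x y _ _ hx hy => rw [ι_add, map_add, hx, hy]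
    | smul r x _ hx => rw [ι_smul, map_smul, hx]
  exact h3 d1 hd1

theorem hump_step {y : ℕ → QD} (hy : QBlock y) (V : Submodule ℝ 𝒲)
    (hV : V ≤ closedSpan (b.ι '' Set.range y)) (hinf : ¬ FiniteDimensional ℝ V)
    (n : ℕ) {ε : ℝ} (hε : 0 < ε) :
    ∃ z : QD, z ∈ Dn n ∧ z ≠ 0 ∧ z ∈ Submodule.span ℚ (Set.range y) ∧
      ∃ v ∈ V, ‖b.ι z - v‖ ≤ ε * ‖b.ι z‖ := by
  have hB := b.hB
  set m := bd (y n) with hm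
  let F : Submodule ℝ 𝒲 := Submodule.span ℝ (b.ι '' (y '' Set.Iic n))
  have hFfin : FiniteDimensional ℝ F :=
    FiniteDimensional.span_of_finite ℝ (((Set.finite_Iic n).image y).image b.ι)
  have hPF : ∀ v ∈ V, b.P m v ∈ F := by
    intro v hv
    have hcl : IsClosed (F : Set 𝒲) := Submodule.closed_of_finiteDimensional F
    have : (closedSpan (b.ι '' Set.range y)) ≤ F.comap (b.P m : 𝒲 →ₗ[ℝ] 𝒲) := by
      refine Submodule.topologicalClosure_minimal _ ?_ (hcl.preimage (b.P m).continuous)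
      rw [Submodule.span_le]
      rintro _ ⟨d, hd, rfl⟩
      obtain ⟨d1, hd1, -, -, -, -, h⟩ := b.split hy n (Submodule.subset_span hd)
      show b.P m (b.ι d) ∈ F
      rw [h]
      exact b.ι_mem_span hd1
    exact this (hV hv)
  let G : V →ₗ[ℝ] F := ((b.P m : 𝒲 →ₗ[ℝ] 𝒲).comp V.subtype).codRestrict F (fun v => hPF v v.2)
  obtain ⟨v, hvne, hv⟩ : ∃ v : V, v ≠ 0 ∧ G v = 0 := by
    by_contra hcon
    push Not at hcon
    apply hinf
    have hinj : Function.Injective G := by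
      rw [injective_iff_map_eq_zero]
      intro a ha
      by_contra h
      exact hcon a h ha
    exact FiniteDimensional.of_injective G hinj
  have hPv : b.P m v = 0 := congrArg Subtype.val hv
  have hvpos : 0 < ‖(v : 𝒲)‖ := norm_pos_iff.2 (by simpa using hvne)
  set t : ℝ := ε * ‖(v : 𝒲)‖ / (1 + ε) with ht
  have htpos : 0 < t := by positivity
  obtain ⟨d, hd, hdv⟩ := b.dense_approx (hV v.2) (δ := t / (1 + b.B)) (by positivity)
  obtain ⟨d1, hd1, d2, hd2, hd2n, hsum, hP⟩ := b.split hy n hd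
  have h1 : b.ι d2 - v = - (((v : 𝒲) - b.ι d) - b.P m ((v : 𝒲) - b.ι d)) := by
    rw [map_sub, hPv, hP, hsum, ι_add]; abel
  have h2 : ‖b.ι d2 - v‖ ≤ t := by
    rw [h1, norm_neg]
    calc _ ≤ ‖(v : 𝒲) - b.ι d‖ + ‖b.P m ((v : 𝒲) - b.ι d)‖ := norm_sub_le _ _
      _ ≤ ‖(v : 𝒲) - b.ι d‖ + b.B * ‖(v : 𝒲) - b.ι d‖ := by gcongr; exact b.hPB _ _
      _ = (1 + b.B) * ‖(v : 𝒲) - b.ι d‖ := by ring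
      _ ≤ (1 + b.B) * (t / (1 + b.B)) := by gcongr
      _ = t := by field_simp
  have h3 : ‖(v : 𝒲)‖ - t ≤ ‖b.ι d2‖ := by
    have := norm_sub_norm_le (v : 𝒲) (b.ι d2)
    rw [norm_sub_rev] at this
    linarith
  have h4 : t = ε * (‖(v : 𝒲)‖ - t) := by rw [ht]; field_simp; ring
  refine ⟨d2, Dn_anti (hy.le_bd n) hd2n, ?_, hd2, v, v.2, ?_⟩
  · rintro rfl
    rw [ι_zero, norm_zero] at h3
    nlinarith
  · calc _ ≤ t := h2
      _ = ε * (‖(v : 𝒲)‖ - t) := h4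
      _ ≤ _ := by gcongr

theorem hump [CompleteSpace 𝒲] {y : ℕ → QD} (hy : QBlock y) (V : Submodule ℝ 𝒲)
    (hV : V ≤ closedSpan (b.ι '' Set.range y)) (hinf : ¬ FiniteDimensional ℝ V)
    (hcl : IsClosed (V : Set 𝒲)) :
    ∃ z : ℕ → QD, QBlock z ∧ (∀ k, z k ∈ Submodule.span ℚ (Set.range y)) ∧
      LinIsoEmbeds (closedSpan (Set.range fun k => b.ι (z k))) V := by
  have hB := b.hB
  obtain ⟨z, hz, hzp⟩ := exists_block' (fun k z => z ∈ Submodule.span ℚ (Set.range y) ∧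
      ∃ v ∈ V, ‖b.ι z - v‖ ≤ ((1 / 2) / (2 * b.B) * (1 / 2) ^ (k + 1)) * ‖b.ι z‖)
    (fun k n => b.hump_step hy V hV hinf n (by positivity))
  choose hzy v hv hzv using hzp
  refine ⟨z, hz, hzy, ?_⟩
  have hpert := fun a n => (b.Blk_ι hz).perturb b (y' := v) (1 / 2) (by norm_num)
    (fun k => (hzv k).trans (le_of_eq (by ring))) a n
  let f : ℕ → 𝒲 × 𝒲 := fun i => (b.ι (z i), v i)
  refine lemmaE (Submodule.span ℝ (Set.range f)) 2 ?_ _ _ hcl ?_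
  · intro w hw
    obtain ⟨n, a, rfl⟩ := (mem_span_range_iff' f w).1 hw
    have e1 : (∑ i ∈ Finset.range n, a i • f i).1 = ∑ i ∈ Finset.range n, a i • b.ι (z i) := by
      simp [f, Prod.fst_sum]
    have e2 : (∑ i ∈ Finset.range n, a i • f i).2 = ∑ i ∈ Finset.range n, a i • v i := by
      simp [f, Prod.snd_sum]
    rw [e1, e2]
    have h := hpert a n
    set p := ∑ i ∈ Finset.range n, a i • b.ι (z i)
    set q := ∑ i ∈ Finset.range n, a i • v i
    have h1 := norm_sub_norm_le p q
    have h2 := norm_sub_norm_le q p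
    rw [norm_sub_rev] at h2
    have h3 := norm_nonneg p
    constructor <;> linarith
  · rintro _ ⟨k, rfl⟩
    exact ⟨v k, hv k, Submodule.subset_span ⟨k, rfl⟩⟩

end BData
end real
end Rosendal

end

section
open Filter Topology
namespace Rosendal

/-- initial unit vectors -/
noncomputable def EN (N : ℕ) : Finset QD := (Finset.range N).image fun i => Finsupp.single i 1

theorem mem_EN {N : ℕ} {d : QD} : d ∈ EN N ↔ ∃ i < N, Finsupp.single i 1 = d := by
  simp [EN]

theorem EN_mono {N N' : ℕ} (h : N ≤ N') : EN N ⊆ EN N' :=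
  Finset.image_subset_image (Finset.range_mono h)

section real
variable {𝒲 : Type} [NormedAddCommGroup 𝒲] [NormedSpace ℝ 𝒲]
namespace BData
variable (b : BData 𝒲)

/-- pairs -/
noncomputable def ι2 (p : QD × QD) : 𝒲 × 𝒲 := (b.ι p.1, b.ι p.2)

theorem ι2_mem_span {S : Set (QD × QD)} {d : QD × QD} (hd : d ∈ Submodule.span ℚ S) :
    b.ι2 d ∈ Submodule.span ℝ (b.ι2 '' S) := by
  induction hd using Submodule.span_induction with
  | mem x hx => exact Submodule.subset_span ⟨x, hx, rfl⟩
  | zero => simp only [ι2, Prod.fst_zero, Prod.snd_zero, ι_zero]; exact Submodule.zero_mem _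
  | add x y _ _ hx hy =>
    have : b.ι2 (x + y) = b.ι2 x + b.ι2 y := by simp [ι2, ι_add]
    rw [this]; exact Submodule.add_mem _ hx hy
  | smul r x _ hx =>
    have : b.ι2 (r • x) = (r : ℝ) • b.ι2 x := by simp [ι2, ι_smul]
    rw [this]; exact Submodule.smul_mem _ _ hx

/-- the relation is a `C`-isomorphism -/
def Cond (C : ℕ) (Γ : Set (QD × QD)) : Prop :=
  ∀ w ∈ Submodule.span ℝ (b.ι2 '' Γ), ‖w.1‖ ≤ C * ‖w.2‖ ∧ ‖w.2‖ ≤ C * ‖w.1‖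

variable {b}

theorem Cond.mono {C C' : ℕ} (h : C ≤ C') {Γ Γ' : Set (QD × QD)} (hΓ : Γ' ⊆ Γ)
    (hc : b.Cond C Γ) : b.Cond C' Γ' := by
  intro w hw
  have := hc w (Submodule.span_mono (Set.image_mono hΓ) hw)
  have h' : (C : ℝ) ≤ C' := by exact_mod_cast h
  exact ⟨this.1.trans (by gcongr), this.2.trans (by gcongr)⟩

theorem Cond.iUnion {C : ℕ} {Γ : ℕ → Set (QD × QD)} (hΓ : Monotone Γ)
    (hc : ∀ k, b.Cond C (Γ k)) : b.Cond C (⋃ k, Γ k) := by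
  intro w hw
  rw [Set.image_iUnion, Submodule.span_iUnion, Submodule.mem_iSup_of_directed] at hw
  · obtain ⟨k, hk⟩ := hw
    exact hc k w hk
  · exact Monotone.directed_le fun i j hij => Submodule.span_mono (Set.image_mono (hΓ hij))

variable (b)

/-- closed family of positions -/
def ClosedP (C : ℕ) (L M : Submodule ℚ QD) (PP : Set (Finset (QD × QD) × Finset QD)) : Prop :=
  ∀ q ∈ PP, b.Cond C q.1 ∧ ∀ (n : ℕ) (A : Finset QD), (∀ a ∈ A, a ∈ L) →
    ∃ (Γ' : Finset (QD × QD)) (B : Finset QD), q.1 ⊆ Γ' ∧ (∀ x ∈ B, x ∈ M ∧ x ∈ Dn n) ∧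
      (∀ p ∈ Γ', p.2 ∈ Submodule.span ℚ (↑(q.2 ∪ B) : Set QD)) ∧
      (∀ a ∈ A, ∃ u, (a, u) ∈ Submodule.span ℚ (Γ' : Set (QD × QD))) ∧
      (Γ', q.2 ∪ B) ∈ PP

/-- winning positions -/
def Win (C : ℕ) (L M : Submodule ℚ QD) (q : Finset (QD × QD) × Finset QD) : Prop :=
  ∃ PP, b.ClosedP C L M PP ∧ q ∈ PP

variable {b}

theorem Win.cond {C : ℕ} {L M : Submodule ℚ QD} {q : Finset (QD × QD) × Finset QD}
    (h : b.Win C L M q) : b.Cond C q.1 := by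
  obtain ⟨PP, h1, h2⟩ := h
  exact (h1 q h2).1

theorem Win.step {C : ℕ} {L M : Submodule ℚ QD} {q : Finset (QD × QD) × Finset QD}
    (h : b.Win C L M q) (n : ℕ) (A : Finset QD) (hA : ∀ a ∈ A, a ∈ L) :
    ∃ (Γ' : Finset (QD × QD)) (B : Finset QD), q.1 ⊆ Γ' ∧ (∀ x ∈ B, x ∈ M ∧ x ∈ Dn n) ∧
      (∀ p ∈ Γ', p.2 ∈ Submodule.span ℚ (↑(q.2 ∪ B) : Set QD)) ∧
      (∀ a ∈ A, ∃ u, (a, u) ∈ Submodule.span ℚ (Γ' : Set (QD × QD))) ∧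
      b.Win C L M (Γ', q.2 ∪ B) := by
  obtain ⟨PP, h1, h2⟩ := h
  obtain ⟨Γ', B, h3, h4, h5, h6, h7⟩ := (h1 q h2).2 n A hA
  exact ⟨Γ', B, h3, h4, h5, h6, PP, h1, h7⟩

theorem Win.mono {C C' : ℕ} {L L' M M' : Submodule ℚ QD} {Γ : Finset (QD × QD)} {G G' : Finset QD}
    (h : b.Win C L M (Γ, G)) (hC : C ≤ C') (hL : L' ≤ L) (hM : ∃ n, M ⊓ Dn n ≤ M')
    (hG : G ⊆ G') : b.Win C' L' M' (Γ, G') := by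
  obtain ⟨n0, hM⟩ := hM
  refine ⟨{q | ∃ G, b.Win C L M (q.1, G) ∧ G ⊆ q.2}, ?_, G, h, hG⟩
  rintro ⟨Γ, G'⟩ ⟨G, hw, hG⟩
  simp only at hw hG
  refine ⟨hw.cond.mono hC subset_rfl, fun n A hA => ?_⟩
  obtain ⟨Γ', B, h3, h4, h5, h6, h7⟩ := hw.step (max n n0) A (fun a ha => hL (hA a ha))
  have hsub : G ∪ B ⊆ G' ∪ B := Finset.union_subset_union_left hG
  refine ⟨Γ', B, h3, fun x hx => ⟨hM ⟨(h4 x hx).1, Dn_anti (le_max_right _ _) (h4 x hx).2⟩,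
    Dn_anti (le_max_left _ _) (h4 x hx).2⟩, fun p hp => ?_, h6, G ∪ B, h7, hsub⟩
  exact Submodule.span_mono (Finset.coe_subset.2 hsub) (h5 p hp)

variable (b)

/-- the game hypothesis -/
def Star (C N : ℕ) (M : Submodule ℚ QD) : Prop :=
  ∃ L ≤ M, Fat L ∧ b.Win C L M (∅, EN N)

/-- stable positions -/
def PSet (C : ℕ) (M : Submodule ℚ QD) : Set (Finset (QD × QD) × Finset QD × Finset QD) :=
  {s | ∃ L ≤ M, Fat L ∧ b.Win C (L ⊔ Submodule.span ℚ (s.2.1 : Set QD)) M (s.1, s.2.2)}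

variable {b}

theorem PSet_mono {C : ℕ} {M M' : Submodule ℚ QD} (h : ∃ n, M' ⊓ Dn n ≤ M) :
    b.PSet C M' ⊆ b.PSet C M := by
  rintro ⟨Γ, H, G⟩ ⟨L, hL, hLf, hw⟩
  obtain ⟨n, hn⟩ := h
  exact ⟨L ⊓ Dn n, (inf_le_inf_right _ hL).trans hn, hLf.inf_Dn n,
    hw.mono le_rfl (sup_le_sup_right inf_le_left _) ⟨n, hn⟩ subset_rfl⟩

theorem uniformize (h : ∀ M, Fat M → ∃ C N, b.Star C N M) :
    ∃ N X, Fat X ∧ ∀ M ≤ X, Fat M → b.Star N N M := by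
  by_contra hcon
  push Not at hcon
  obtain ⟨X, -, hX, hQ⟩ := fusion ⊤ fat_top (fun N M => ¬ b.Star N N M)
    (fun N M M' hM hM' ⟨n, hn⟩ hQ ⟨L, hL, hLf, hw⟩ => hQ ⟨L ⊓ Dn n,
      (inf_le_inf_right _ hL).trans hn, hLf.inf_Dn n,
      hw.mono le_rfl inf_le_left ⟨n, hn⟩ subset_rfl⟩)
    (fun N M _ hM => hcon N M hM)
  obtain ⟨C, N, L, hL, hLf, hw⟩ := h X hX
  exact hQ (max C N) ⟨L, hL, hLf, hw.mono (le_max_left _ _) le_rfl ⟨0, inf_le_left⟩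
    (EN_mono (le_max_right _ _))⟩

theorem stabilize (C : ℕ) (X : Submodule ℚ QD) (hX : Fat X) :
    ∃ X1 ≤ X, Fat X1 ∧ ∀ M ≤ X1, Fat M → b.PSet C M = b.PSet C X1 := by
  obtain ⟨X1, h1, hX1, hQ⟩ := fusion X hX
    (fun s M => s ∉ b.PSet C M ∨ ∀ M' ≤ M, Fat M' → s ∈ b.PSet C M')
    (by
      rintro s M M' hM hM' ⟨n, hn⟩ (h | h)
      · exact Or.inl fun h' => h (PSet_mono ⟨n, hn⟩ h')
      · refine Or.inr fun M'' hM'' hf => ?_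
        exact PSet_mono ⟨0, inf_le_left.trans inf_le_left⟩ (h (M'' ⊓ Dn n)
          ((inf_le_inf_right _ hM'').trans hn) (hf.inf_Dn n)))
    (by
      intro s M _ hM
      by_cases h : ∀ M' ≤ M, Fat M' → s ∈ b.PSet C M'
      · exact ⟨M, le_rfl, hM, Or.inr h⟩
      · push Not at h
        obtain ⟨M', h1, h2, h3⟩ := h
        exact ⟨M', h1, h2, Or.inl h3⟩)
  refine ⟨X1, h1, hX1, fun M hM hf => Set.Subset.antisymm
    (PSet_mono ⟨0, inf_le_left.trans hM⟩) fun s hs => ?_⟩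
  exact (hQ s).resolve_left (not_not.2 hs) M hM hf

theorem exists_strategy (h : ∀ M, Fat M → ∃ C N, b.Star C N M) :
    ∃ (N : ℕ) (X : Submodule ℚ QD) (P : Set (Finset (QD × QD) × Finset QD × Finset QD)),
      Fat X ∧ b.Star N N X ∧ (∅, ∅, EN N) ∈ P ∧
      (∀ Γ H G, (Γ, H, G) ∈ P → b.Cond N Γ) ∧
      (∀ Γ H G, (Γ, H, G) ∈ P → ∃ n, ∀ H' : Finset QD, (∀ x ∈ H', x ∈ X ∧ x ∈ Dn n) →
        (Γ, H ∪ H', G) ∈ P) ∧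
      (∀ Γ H G, (Γ, H, G) ∈ P → ∀ A : Finset QD,
        (∀ a ∈ A, a ∈ Submodule.span ℚ (H : Set QD)) → ∀ Z ≤ X, Fat Z → ∃ (Γ' : Finset (QD × QD))
        (B : Finset QD), Γ ⊆ Γ' ∧ (∀ x ∈ B, x ∈ Z) ∧
        (∀ p ∈ Γ', p.2 ∈ Submodule.span ℚ (↑(G ∪ B) : Set QD)) ∧
        (∀ a ∈ A, ∃ u, (a, u) ∈ Submodule.span ℚ (Γ' : Set (QD × QD))) ∧
        (Γ', H, G ∪ B) ∈ P) := by
  obtain ⟨N, X, hX, hstar⟩ := uniformize h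
  obtain ⟨X1, hX1X, hX1, hst⟩ := stabilize (b := b) N X hX
  have hi : ∀ Γ H G, (Γ, H, G) ∈ b.PSet N X1 → ∀ M ≤ X1, Fat M → ∃ L ≤ M, Fat L ∧
      ∀ H' : Finset QD, (∀ x ∈ H', x ∈ L) → (Γ, H ∪ H', G) ∈ b.PSet N X1 := by
    intro Γ H G hs M hM hf
    rw [← hst M hM hf] at hs
    obtain ⟨L, hL, hLf, hw⟩ := hs
    refine ⟨L, hL, hLf, fun H' hH' => ?_⟩
    rw [← hst M hM hf]
    refine ⟨L, hL, hLf, hw.mono le_rfl ?_ ⟨0, inf_le_left⟩ subset_rfl⟩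
    refine sup_le le_sup_left ?_
    rw [Submodule.span_le]
    intro x hx
    rcases Finset.mem_union.1 (Finset.mem_coe.1 hx) with hx | hx
    · exact Submodule.mem_sup_right (Submodule.subset_span hx)
    · exact Submodule.mem_sup_left (hH' x hx)
  obtain ⟨X2, hX2, hX2f, hQ⟩ := fusion X1 hX1
    (fun (s : Finset (QD × QD) × Finset QD × Finset QD) M => s ∈ b.PSet N X1 → ∃ n,
      ∀ H' : Finset QD, (∀ x ∈ H', x ∈ M ∧ x ∈ Dn n) → (s.1, s.2.1 ∪ H', s.2.2) ∈ b.PSet N X1)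
    (by
      rintro s M M' hM hM' ⟨n, hn⟩ h hs
      obtain ⟨k, hk⟩ := h hs
      refine ⟨max n k, fun H' hH' => hk H' fun x hx => ?_⟩
      exact ⟨hn ⟨(hH' x hx).1, Dn_anti (le_max_left _ _) (hH' x hx).2⟩,
        Dn_anti (le_max_right _ _) (hH' x hx).2⟩)
    (by
      rintro ⟨Γ, H, G⟩ M hM hf
      by_cases hs : (Γ, H, G) ∈ b.PSet N X1
      · obtain ⟨L, hL, hLf, h'⟩ := hi Γ H G hs M hM hf
        exact ⟨L, hL, hLf, fun _ => ⟨0, fun H' hH' => h' H' fun x hx => (hH' x hx).1⟩⟩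
      · exact ⟨M, le_rfl, hf, fun h' => (hs h').elim⟩)
  refine ⟨N, X2, b.PSet N X1, hX2f, hstar X2 (hX2.trans hX1X) hX2f, ?_, ?_, ?_, ?_⟩
  · obtain ⟨L, hL, hLf, hw⟩ := hstar X1 hX1X hX1
    exact ⟨L, hL, hLf, hw.mono le_rfl (by simp) ⟨0, inf_le_left⟩ subset_rfl⟩
  · rintro Γ H G ⟨L, hL, hLf, hw⟩
    exact hw.cond
  · intro Γ H G hs
    exact hQ (Γ, H, G) hs
  · intro Γ H G hs A hA Z hZ hZf
    rw [← hst Z (hZ.trans hX2) hZf] at hs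
    obtain ⟨L, hL, hLf, hw⟩ := hs
    obtain ⟨Γ', B, h3, h4, h5, h6, h7⟩ := hw.step 0 A (fun a ha => Submodule.mem_sup_right (hA a ha))
    refine ⟨Γ', B, h3, fun x hx => (h4 x hx).1, h5, h6, ?_⟩
    rw [← hst Z (hZ.trans hX2) hZf]
    exact ⟨L, hL, hLf, h7⟩

end BData
end real
end Rosendal

end

section
open Filter Topology
namespace Rosendal
section real
variable {𝒲 : Type} [NormedAddCommGroup 𝒲] [NormedSpace ℝ 𝒲]
namespace BData
variable {b : BData 𝒲}

theorem snd_mem_of_span {Γ : Set (QD × QD)} {W : Submodule ℚ QD} (h : ∀ p ∈ Γ, p.2 ∈ W) {a u : QD}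
    (hu : (a, u) ∈ Submodule.span ℚ Γ) : u ∈ W := by
  have : Submodule.span ℚ Γ ≤ W.comap (LinearMap.snd ℚ QD QD) := by
    rw [Submodule.span_le]; exact fun p hp => h p hp
  exact this hu

/-- state of the joint play -/
structure JState where
  Γ1 : Finset (QD × QD)
  G1 : Finset QD
  Γ2 : Finset (QD × QD)
  H : Finset QD
  G2 : Finset QD

theorem infdim_of_block {y : ℕ → QD} (hy : QBlock y) :
    ¬ FiniteDimensional ℝ (closedSpan (b.ι '' Set.range y)) := by
  intro hfin
  have hmem : ∀ k, b.ι (y k) ∈ closedSpan (b.ι '' Set.range y) := fun k =>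
    Submodule.le_topologicalClosure _ (Submodule.subset_span ⟨y k, ⟨k, rfl⟩, rfl⟩)
  let f : ℕ → closedSpan (b.ι '' Set.range y) := fun k => ⟨b.ι (y k), hmem k⟩
  have hli : LinearIndependent ℝ f := by
    rw [linearIndependent_iff]
    intro l hl
    ext k
    have h1 : ∑ i ∈ Finset.range (l.support.sup id + 1 + k + 1), l i • b.ι (y i) = 0 := by
      have := congrArg Subtype.val hl
      rw [Finsupp.linearCombination_apply, Finsupp.sum_of_support_subset
        (s := Finset.range (l.support.sup id + 1 + k + 1))] at this
      · simpa [f] using this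
      · intro i hi
        rw [Finset.mem_range]
        have : i ≤ l.support.sup id := Finset.le_sup (f := id) hi
        omega
      · simp
    have h2 := (b.Blk_ι hy).coeff b l (l.support.sup id + 1 + k + 1) k (by omega)
    rw [h1, norm_zero, mul_zero] at h2
    have h3 : 0 < ‖b.ι (y k)‖ := norm_pos_iff.2 (b.ι_ne (hy.ne k))
    have h4 : |l k| ≤ 0 := by
      by_contra hcon
      push Not at hcon
      have := mul_pos hcon h3
      linarith
    simpa using h4
  exact Set.infinite_univ (α := ℕ) (by
    have := hli.finite
    exact Set.finite_univ)

theorem partII [CompleteSpace 𝒲] (h : ∀ M, Fat M → ∃ C N, b.Star C N M) :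
    ∃ X : Submodule ℝ 𝒲, IsClosed (X : Set 𝒲) ∧ ¬ FiniteDimensional ℝ X ∧ IsMinimalSpace X := by
  obtain ⟨N, X, P, hX, ⟨L, hLX, hLf, hwin⟩, hP0, hPcond, hPadd, hPask⟩ := exists_strategy h
  obtain ⟨y, hy, hyL⟩ := exists_block (fun _ => L) (fun _ => hLf) (fun _ => 0)
  refine ⟨closedSpan (b.ι '' Set.range y), Submodule.isClosed_topologicalClosure _,
    infdim_of_block hy, fun V hV hVcl hVinf => ?_⟩
  obtain ⟨z, hz, hzy, hzV⟩ := b.hump hy V hV hVinf hVcl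
  have hyX : Submodule.span ℚ (Set.range y) ≤ X := by
    rw [Submodule.span_le]
    rintro _ ⟨k, rfl⟩
    exact hLX (hyL k).1
  -- target
  let Z : Submodule ℚ QD := Submodule.span ℚ (z '' Set.Ici N)
  have hZX : Z ≤ X := by
    rw [Submodule.span_le]
    rintro _ ⟨k, -, rfl⟩
    exact hyX (hzy k)
  have hZf : Fat Z := fun n => ⟨z (max n N), Submodule.subset_span ⟨_, Set.mem_Ici.2 (le_max_right n N), rfl⟩,
    Dn_anti (le_max_left _ _) (hz.mem_Dn_self _), hz.ne _⟩
  -- initial h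
  obtain ⟨ns, hns⟩ := hPadd _ _ _ hP0
  obtain ⟨hh, hhb, hhX⟩ := exists_block (fun _ => X) (fun _ => hX) (fun _ => ns)
  let H0 : Finset QD := (Finset.range N).image hh
  have hinit : ((∅ : Finset (QD × QD)), H0, EN N) ∈ P := by
    have := hns H0 (fun x hx => by
      obtain ⟨i, -, rfl⟩ := Finset.mem_image.1 hx
      exact hhX i)
    simpa using this
  set n1 := max (bdry hh N) N with hn1
  let Inv : JState → Prop := fun s => b.Win N L X (s.Γ1, s.G1) ∧ (s.Γ2, s.H, s.G2) ∈ P ∧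
    (∀ g ∈ s.G1, g ∈ EN N ∨ (g ∈ s.H ∧ g ∈ Dn n1)) ∧ (∀ g ∈ s.G2, g ∈ EN N ∨ g ∈ Z) ∧
    (∀ p ∈ s.Γ1, p.2 ∈ Submodule.span ℚ (s.G1 : Set QD)) ∧
    (∀ p ∈ s.Γ2, p.2 ∈ Submodule.span ℚ (s.G2 : Set QD)) ∧ H0 ⊆ s.H
  have hstep : ∀ (k : ℕ) (s : {s // Inv s}), ∃ s' : {s // Inv s}, s.1.Γ1 ⊆ s'.1.Γ1 ∧
      s.1.Γ2 ⊆ s'.1.Γ2 ∧ s.1.H ⊆ s'.1.H ∧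
      (∃ u, (y k, u) ∈ Submodule.span ℚ (s'.1.Γ1 : Set (QD × QD))) ∧
      (∀ x ∈ s'.1.H, ∃ u, (x, u) ∈ Submodule.span ℚ (s'.1.Γ2 : Set (QD × QD))) := by
    rintro k ⟨⟨Γ1, G1, Γ2, H, G2⟩, i1, i2, i3, i4, i5, i6, i7⟩
    simp only at i1 i2 i3 i4 i5 i6 i7
    obtain ⟨n, hn⟩ := hPadd _ _ _ i2
    obtain ⟨Γ1', B1, a1, a2, a3, a4, a5⟩ := i1.step (max n n1) {y k} (by simpa using (hyL k).1)
    have i2' := hn B1 (fun x hx => ⟨(a2 x hx).1, Dn_anti (le_max_left _ _) (a2 x hx).2⟩)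
    obtain ⟨Γ2', B2, c1, c2, c3, c4, c5⟩ := hPask _ _ _ i2' (H ∪ B1)
      (fun a ha => Submodule.subset_span (Finset.mem_coe.2 ha)) Z hZX hZf
    refine ⟨⟨⟨Γ1', G1 ∪ B1, Γ2', H ∪ B1, G2 ∪ B2⟩, a5, c5, ?_, ?_, a3, c3,
      i7.trans Finset.subset_union_left⟩, a1, c1, Finset.subset_union_left, a4 _ (by simp), c4⟩
    · intro g hg
      rcases Finset.mem_union.1 hg with hg | hg
      · rcases i3 g hg with hg | hg
        · exact Or.inl hg
        · exact Or.inr ⟨Finset.mem_union_left _ hg.1, hg.2⟩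
      · exact Or.inr ⟨Finset.mem_union_right _ hg, Dn_anti (le_max_right _ _) (a2 g hg).2⟩
    · intro g hg
      rcases Finset.mem_union.1 hg with hg | hg
      · exact i4 g hg
      · exact Or.inr (c2 g hg)
  choose F hF using hstep
  have hInv0 : Inv ⟨∅, EN N, ∅, H0, EN N⟩ :=
    ⟨hwin, hinit, fun g hg => Or.inl hg, fun g hg => Or.inl hg, by simp, by simp, subset_rfl⟩
  let s : ℕ → {s // Inv s} := fun k => Nat.rec ⟨_, hInv0⟩ (fun k s => F k s) k
  have hs : ∀ k, s (k + 1) = F k (s k) := fun k => rfl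
  have hm1 : Monotone fun k => ((s k).1.Γ1 : Set (QD × QD)) :=
    monotone_nat_of_le_succ fun k => by
      show ((s k).1.Γ1 : Set (QD × QD)) ⊆ _
      rw [hs]; exact Finset.coe_subset.2 (hF k (s k)).1
  have hm2 : Monotone fun k => ((s k).1.Γ2 : Set (QD × QD)) :=
    monotone_nat_of_le_succ fun k => by
      show ((s k).1.Γ2 : Set (QD × QD)) ⊆ _
      rw [hs]; exact Finset.coe_subset.2 (hF k (s k)).2.1
  have hmH : ∀ k, (s k).1.H ⊆ (s (k + 1)).1.H := fun k => by
    rw [hs]; exact (hF k (s k)).2.2.1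
  have hc1 : b.Cond N (⋃ k, ((s k).1.Γ1 : Set (QD × QD))) :=
    Cond.iUnion hm1 fun k => (s k).2.1.cond
  have hc2 : b.Cond N (⋃ k, ((s k).1.Γ2 : Set (QD × QD))) :=
    Cond.iUnion hm2 fun k => hPcond _ _ _ (s k).2.2.1
  -- the set of B's
  let Bs : Set QD := {x | (∃ k, x ∈ (s k).1.H) ∧ x ∈ Dn n1}
  have heN : ∀ (S : Set QD) (g : QD), g ∈ EN N → b.ι g ∈ closedSpan (b.e '' Set.Iio N ∪ b.ι '' S) := by
    intro S g hg
    obtain ⟨i, hi, rfl⟩ := mem_EN.1 hg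
    refine Submodule.le_topologicalClosure _ (Submodule.subset_span (Or.inl ⟨i, hi, ?_⟩))
    simp
  have hsp : ∀ (G : Finset QD) (W : Submodule ℝ 𝒲) (u : QD), (∀ g ∈ G, b.ι g ∈ W) →
      u ∈ Submodule.span ℚ (G : Set QD) → b.ι u ∈ W := by
    intro G W u hG hu
    refine (Submodule.span_le.2 ?_ : _ ≤ W) (b.ι_mem_span hu)
    rintro _ ⟨g, hg, rfl⟩
    exact hG g hg
  have E1 : LinIsoEmbeds (closedSpan (b.ι '' Set.range y))
      (closedSpan (b.e '' Set.Iio N ∪ b.ι '' Bs)) := by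
    refine lemmaE (Submodule.span ℝ (b.ι2 '' _)) N hc1 _ _
      (Submodule.isClosed_topologicalClosure _) ?_
    rintro _ ⟨_, ⟨k, rfl⟩, rfl⟩
    obtain ⟨u, hu⟩ := (hF k (s k)).2.2.2.1
    rw [← hs] at hu
    refine ⟨b.ι u, ?_, ?_⟩
    · refine hsp (s (k + 1)).1.G1 _ u (fun g hg => ?_)
        (snd_mem_of_span (s (k + 1)).2.2.2.2.2.1 hu)
      rcases (s (k + 1)).2.2.2.1 g hg with hg | hg
      · exact heN _ g hg
      · exact Submodule.le_topologicalClosure _ (Submodule.subset_span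
          (Or.inr ⟨g, ⟨⟨k + 1, hg.1⟩, hg.2⟩, rfl⟩))
    · exact b.ι2_mem_span (Submodule.span_mono (Set.subset_iUnion
        (fun k => ((s k).1.Γ1 : Set (QD × QD))) (k + 1)) hu)
  have E2 : LinIsoEmbeds (closedSpan (b.e '' Set.Iio N ∪ b.ι '' Bs))
      (closedSpan ((fun i => b.ι (hh i)) '' Set.Iio N ∪ b.ι '' Bs)) := by
    refine b.lemmaF b.Blk_e (b.Blk_ι hhb) b.e_ne (fun k => b.ι_ne (hhb.ne k)) N N (bdry hh N)
      (fun i hi => ?_) (fun i hi => ?_) _ ?_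
    · rw [b.hPe, if_pos hi]
    · rw [b.Blk_ι hhb, if_pos hi]
    · rintro _ ⟨x, ⟨-, hx⟩, rfl⟩
      exact ⟨b.P_ι_Dn (Dn_anti (le_max_right _ _) hx), b.P_ι_Dn (Dn_anti (le_max_left _ _) hx)⟩
  have E3 : LinIsoEmbeds (closedSpan ((fun i => b.ι (hh i)) '' Set.Iio N ∪ b.ι '' Bs))
      (closedSpan (b.e '' Set.Iio N ∪ b.ι '' (Z : Set QD))) := by
    refine lemmaE (Submodule.span ℝ (b.ι2 '' _)) N hc2 _ _
      (Submodule.isClosed_topologicalClosure _) ?_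
    have key : ∀ k, ∀ x ∈ (s k).1.H, ∃ v ∈ closedSpan (b.e '' Set.Iio N ∪ b.ι '' (Z : Set QD)),
        (b.ι x, v) ∈ Submodule.span ℝ (b.ι2 '' (⋃ k, ((s k).1.Γ2 : Set (QD × QD)))) := by
      intro k x hx
      obtain ⟨u, hu⟩ := (hF k (s k)).2.2.2.2 x (hmH k hx)
      rw [← hs] at hu
      refine ⟨b.ι u, ?_, ?_⟩
      · refine hsp (s (k + 1)).1.G2 _ u (fun g hg => ?_)
          (snd_mem_of_span (s (k + 1)).2.2.2.2.2.2.1 hu)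
        rcases (s (k + 1)).2.2.2.2.1 g hg with hg | hg
        · exact heN _ g hg
        · exact Submodule.le_topologicalClosure _ (Submodule.subset_span (Or.inr ⟨g, hg, rfl⟩))
      · exact b.ι2_mem_span (Submodule.span_mono (Set.subset_iUnion
          (fun k => ((s k).1.Γ2 : Set (QD × QD))) (k + 1)) hu)
    rintro _ (⟨i, hi, rfl⟩ | ⟨x, ⟨⟨k, hk⟩, -⟩, rfl⟩)
    · exact key 0 _ ((s 0).2.2.2.2.2.2.2 (Finset.mem_image_of_mem _ (Finset.mem_range.2 hi)))
    · exact key k x hk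
  have E4 : LinIsoEmbeds (closedSpan (b.e '' Set.Iio N ∪ b.ι '' (Z : Set QD)))
      (closedSpan ((fun i => b.ι (z i)) '' Set.Iio N ∪ b.ι '' (Z : Set QD))) := by
    have hZ1 : ∀ m, (∀ k, N ≤ k → z k ∈ Dn m) → Z ≤ Dn m := by
      intro m hm
      rw [Submodule.span_le]
      rintro _ ⟨k, hk, rfl⟩
      exact hm k hk
    refine b.lemmaF b.Blk_e (b.Blk_ι hz) b.e_ne (fun k => b.ι_ne (hz.ne k)) N N (bdry z N)
      (fun i hi => ?_) (fun i hi => ?_) _ ?_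
    · rw [b.hPe, if_pos hi]
    · rw [b.Blk_ι hz, if_pos hi]
    · rintro _ ⟨x, hx, rfl⟩
      refine ⟨b.P_ι_Dn (hZ1 N (fun k hk => Dn_anti hk (hz.mem_Dn_self k)) hx),
        b.P_ι_Dn (hZ1 _ (fun k hk => ?_) hx)⟩
      cases N with
      | zero => intro i hi; exact absurd hi (Nat.not_lt_zero i)
      | succ N => exact hz.mem_Dn_lt hk
  refine (((E1.trans E2).trans E3).trans E4).trans (LinIsoEmbeds.trans ?_ hzV)
  have hle : closedSpan ((fun i => b.ι (z i)) '' Set.Iio N ∪ b.ι '' (Z : Set QD)) ≤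
      closedSpan (Set.range fun k => b.ι (z k)) := by
    refine Submodule.topologicalClosure_mono ?_
    rw [Submodule.span_le]
    rintro _ (⟨i, -, rfl⟩ | ⟨x, hx, rfl⟩)
    · exact Submodule.subset_span ⟨i, rfl⟩
    · refine Submodule.span_mono ?_ (b.ι_mem_span hx)
      rintro _ ⟨_, ⟨k, -, rfl⟩, rfl⟩
      exact ⟨k, rfl⟩
  exact ⟨Submodule.subtype _, fun v => hle v.2, 1, 1, one_pos, fun v => by simp⟩

end BData
end real
end Rosendal

end

section
open Filter Topology
namespace Rosendal

theorem exists_bound {f : ℕ → QD} {s : Set ℕ} {u : QD} (hu : u ∈ Submodule.span ℚ (f '' s)) :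
    ∃ M, u ∈ Submodule.span ℚ (f '' (s ∩ Set.Iio M)) := by
  induction hu using Submodule.span_induction with
  | mem x hx =>
    obtain ⟨i, hi, rfl⟩ := hx
    exact ⟨i + 1, Submodule.subset_span ⟨i, ⟨hi, Nat.lt_succ_self i⟩, rfl⟩⟩
  | zero => exact ⟨0, Submodule.zero_mem _⟩
  | add x y _ _ hx hy =>
    obtain ⟨M, hM⟩ := hx
    obtain ⟨M', hM'⟩ := hy
    have hmono : ∀ A B : ℕ, A ≤ B → Submodule.span ℚ (f '' (s ∩ Set.Iio A)) ≤
        Submodule.span ℚ (f '' (s ∩ Set.Iio B)) := fun A B h =>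
      Submodule.span_mono (Set.image_mono (Set.inter_subset_inter_right _ (Set.Iio_subset_Iio h)))
    exact ⟨max M M', Submodule.add_mem _ (hmono _ _ (le_max_left _ _) hM)
      (hmono _ _ (le_max_right _ _) hM')⟩
  | smul r x _ hx =>
    obtain ⟨M, hM⟩ := hx
    exact ⟨M, Submodule.smul_mem _ _ hM⟩

theorem pigeon {κ : Type} [Countable κ] (R : κ → Ordinal.{0} → Prop)
    (hR : ∀ i α β, α ≤ β → R i β → R i α)
    (h : ∀ α < Ordinal.omega 1, ∃ i, R i α) : ∃ i, ∀ α < Ordinal.omega 1, R i α := by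
  by_contra hcon
  push Not at hcon
  choose f hf hfR using hcon
  obtain ⟨i, hi⟩ := h (⨆ i, f i) (Ordinal.iSup_lt_omega_one hf)
  exact hfR i (hR i _ _ (Ordinal.le_iSup f i) hi)

section real
variable {𝒲 : Type} [NormedAddCommGroup 𝒲] [NormedSpace ℝ 𝒲]
namespace BData
variable (b : BData 𝒲)

/-- the finite relation -/
noncomputable def Gam (y : ℕ → QD) (v : List QD) : Finset (QD × QD) :=
  (Finset.range v.length).image fun i => (y i, v.getD i 0)

/-- legal positions of the tightness game -/
def Legal (x y : ℕ → QD) (C : ℕ) (q : List QD × Finset ℕ) : Prop :=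
  (∀ u ∈ q.1, u ∈ Submodule.span ℚ (x '' (q.2 : Set ℕ))) ∧ b.Cond C (Gam y q.1)

/-- successor sets -/
def Succ (n : ℕ) (S S' : Finset ℕ) : Prop := S ⊆ S' ∧ ∀ i ∈ S', i ∈ S ∨ n ≤ i

/-- survival -/
def Surv (x y : ℕ → QD) (C : ℕ) (α : Ordinal.{0}) (q : List QD × Finset ℕ) : Prop :=
  b.Legal x y C q ∧ ∀ β, ∀ _h : β < α, ∀ n, ∃ S' u, Succ n q.2 S' ∧
    Surv x y C β (q.1 ++ [u], S')
termination_by α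

variable {b}

theorem Surv_iff {x y : ℕ → QD} {C : ℕ} {α : Ordinal.{0}} {q : List QD × Finset ℕ} :
    b.Surv x y C α q ↔ b.Legal x y C q ∧ ∀ β < α, ∀ n, ∃ S' u, Succ n q.2 S' ∧
      b.Surv x y C β (q.1 ++ [u], S') := by
  rw [Surv]

theorem Surv.anti {x y : ℕ → QD} {C : ℕ} {α β : Ordinal.{0}} {q : List QD × Finset ℕ}
    (h : b.Surv x y C β q) (hab : α ≤ β) : b.Surv x y C α q := by
  rw [Surv_iff] at h ⊢
  exact ⟨h.1, fun γ hγ => h.2 γ (hγ.trans_le hab)⟩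

/-- admissible sequences -/
def Adm (x y : ℕ → QD) : Prop :=
  ∀ i, y i ≠ 0 ∧ y i ∈ Submodule.span ℚ (Set.range x) ∧ y i ∈ Dn i

theorem Legal.congr {x y y' : ℕ → QD} {C : ℕ} {q : List QD × Finset ℕ} (h : b.Legal x y C q)
    (hy : ∀ i < q.1.length, y' i = y i) : b.Legal x y' C q := by
  refine ⟨h.1, ?_⟩
  have : Gam y' q.1 = Gam y q.1 := by
    refine Finset.image_congr fun i hi => ?_
    rw [hy i (by simpa using hi)]
  rw [this]; exact h.2

theorem Gam_prefix (y : ℕ → QD) {v v' : List QD} (h : v <+: v') : Gam y v ⊆ Gam y v' := by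
  intro p hp
  obtain ⟨i, hi, rfl⟩ := Finset.mem_image.1 hp
  obtain ⟨r, rfl⟩ := h
  rw [Finset.mem_range] at hi
  refine Finset.mem_image.2 ⟨i, by simp; omega, ?_⟩
  simp [List.getD_eq_getElem?_getD, List.getElem?_append_left hi]

theorem limit_step {x : ℕ → QD} {C : ℕ} (k : ℕ) (y0 : ℕ → QD) (Q : Finset (List QD × Finset ℕ))
    (hInv : ∀ α < Ordinal.omega 1, ∃ y, Adm x y ∧ (∀ i < k, y i = y0 i) ∧
      ∀ q ∈ Q, b.Surv x y C α q) (p : (List QD × Finset ℕ) × ℕ) :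
    ∃ (y1 : ℕ → QD) (Q' : Finset (List QD × Finset ℕ)),
      (∀ α < Ordinal.omega 1, ∃ y, Adm x y ∧ (∀ i < k + 1, y i = y1 i) ∧
        ∀ q ∈ Q', b.Surv x y C α q) ∧ (∀ i < k, y1 i = y0 i) ∧ Q ⊆ Q' ∧
      (p.1 ∈ Q → ∃ S' u, Succ p.2 p.1.2 S' ∧ (p.1.1 ++ [u], S') ∈ Q') := by
  obtain ⟨d, hd⟩ := pigeon (κ := QD) (fun d α => ∃ y, Adm x y ∧
      (∀ i < k + 1, y i = Function.update y0 k d i) ∧ ∀ q ∈ Q, b.Surv x y C α q)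
    (fun d α β hab ⟨y, h1, h2, h3⟩ => ⟨y, h1, h2, fun q hq => (h3 q hq).anti hab⟩)
    (fun α hα => by
      obtain ⟨y, h1, h2, h3⟩ := hInv α hα
      refine ⟨y k, y, h1, fun i hi => ?_, h3⟩
      rcases Nat.lt_succ_iff_lt_or_eq.1 hi with hi | rfl
      · rw [Function.update_of_ne hi.ne]; exact h2 i hi
      · simp)
  have hy1 : ∀ i < k, Function.update y0 k d i = y0 i := fun i hi =>
    Function.update_of_ne hi.ne _ _
  by_cases hp : p.1 ∈ Q
  · obtain ⟨⟨S', u⟩, hSu⟩ := pigeon (κ := Finset ℕ × QD) (fun s α => Succ p.2 p.1.2 s.1 ∧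
        ∃ y, Adm x y ∧ (∀ i < k + 1, y i = Function.update y0 k d i) ∧
          ∀ q ∈ insert (p.1.1 ++ [s.2], s.1) Q, b.Surv x y C α q)
      (fun d α β hab ⟨h0, y, h1, h2, h3⟩ => ⟨h0, y, h1, h2, fun q hq => (h3 q hq).anti hab⟩)
      (fun α hα => by
        have hα' : Order.succ α < Ordinal.omega 1 :=
          (Cardinal.isSuccLimit_omega 1).succ_lt hα
        obtain ⟨y, h1, h2, h3⟩ := hd _ hα'
        obtain ⟨S', u, h4, h5⟩ := (Surv_iff.1 (h3 _ hp)).2 α (Order.lt_succ α) p.2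
        refine ⟨(S', u), h4, y, h1, h2, fun q hq => ?_⟩
        rcases Finset.mem_insert.1 hq with rfl | hq
        · exact h5
        · exact (h3 q hq).anti (Order.le_succ α))
    refine ⟨Function.update y0 k d, insert (p.1.1 ++ [u], S') Q, fun α hα => (hSu α hα).2, hy1,
      Finset.subset_insert _ _, fun _ => ⟨S', u, (hSu 0 (Ordinal.omega_pos 1)).1,
        Finset.mem_insert_self _ _⟩⟩
  · exact ⟨Function.update y0 k d, Q, hd, hy1, subset_rfl, fun h => (hp h).elim⟩

theorem limit_exists {x : ℕ → QD} {C : ℕ} (q0 : List QD × Finset ℕ)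
    (h : ∀ α < Ordinal.omega 1, ∃ y, Adm x y ∧ b.Surv x y C α q0) :
    ∃ (y : ℕ → QD) (QQ : Set (List QD × Finset ℕ)), Adm x y ∧ q0 ∈ QQ ∧
      (∀ q ∈ QQ, b.Legal x y C q) ∧
      (∀ q ∈ QQ, ∀ n, ∃ S' u, Succ n q.2 S' ∧ (q.1 ++ [u], S') ∈ QQ) := by
  obtain ⟨g, hg⟩ := exists_surjective_nat ((List QD × Finset ℕ) × ℕ)
  let Inv : ℕ → (ℕ → QD) × Finset (List QD × Finset ℕ) → Prop := fun k s =>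
    ∀ α < Ordinal.omega 1, ∃ y, Adm x y ∧ (∀ i < k, y i = s.1 i) ∧
      ∀ q ∈ s.2, b.Surv x y C α q
  have hstep : ∀ k, ∀ s : {s // Inv k s}, ∃ s' : {s // Inv (k + 1) s},
      (∀ i < k, s'.1.1 i = s.1.1 i) ∧ s.1.2 ⊆ s'.1.2 ∧
      ((g k.unpair.1).1 ∈ s.1.2 → ∃ S' u, Succ (g k.unpair.1).2 (g k.unpair.1).1.2 S' ∧
        ((g k.unpair.1).1.1 ++ [u], S') ∈ s'.1.2) := by
    rintro k ⟨⟨y0, Q⟩, hs⟩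
    obtain ⟨y1, Q', h1, h2, h3, h4⟩ := limit_step k y0 Q hs (g k.unpair.1)
    exact ⟨⟨(y1, Q'), h1⟩, h2, h3, h4⟩
  choose F hF using hstep
  have h0 : Inv 0 (0, {q0}) := fun α hα => by
    obtain ⟨y, h1, h2⟩ := h α hα
    exact ⟨y, h1, by simp, by simpa using h2⟩
  let s : ∀ k, {s // Inv k s} := fun k => Nat.rec ⟨_, h0⟩ (fun k s => F k s) k
  have hs : ∀ k, s (k + 1) = F k (s k) := fun k => rfl
  have hQ : Monotone fun k => (s k).1.2 := monotone_nat_of_le_succ fun k => by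
    rw [hs]; exact (hF k (s k)).2.1
  have hy : ∀ m i, i < m → (s m).1.1 i = (s (i + 1)).1.1 i := by
    intro m
    induction m with
    | zero => intro i hi; omega
    | succ m ih =>
      intro i hi
      rcases Nat.lt_succ_iff_lt_or_eq.1 hi with hi | rfl
      · rw [← ih i hi, hs]; exact (hF m (s m)).1 i hi
      · rfl
  refine ⟨fun i => (s (i + 1)).1.1 i, {q | ∃ k, q ∈ (s k).1.2}, ?_, ⟨0, ?_⟩, ?_, ?_⟩
  · intro i
    obtain ⟨y, h1, h2, -⟩ := (s (i + 1)).2 0 (Ordinal.omega_pos 1)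
    simp only [← h2 i (Nat.lt_succ_self i)]
    exact h1 i
  · exact Finset.mem_singleton_self _
  · rintro q ⟨k, hk⟩
    obtain ⟨y, h1, h2, h3⟩ := (s (max k q.1.length)).2 0 (Ordinal.omega_pos 1)
    refine (Surv_iff.1 (h3 q (hQ (le_max_left _ _) hk))).1.congr fun i hi => ?_
    have hi' : i < max k q.1.length := lt_max_of_lt_right hi
    rw [h2 i hi', hy _ i hi']
  · rintro q ⟨k, hk⟩ n
    obtain ⟨c, hc⟩ := hg (q, n)
    have hm : k ≤ Nat.pair c k := Nat.right_le_pair c k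
    have := (hF (Nat.pair c k) (s _)).2.2
    rw [Nat.unpair_pair, hc] at this
    obtain ⟨S', u, h1, h2⟩ := this (hQ hm hk)
    exact ⟨S', u, h1, Nat.pair c k + 1, h2⟩

theorem Adm.fat {x y : ℕ → QD} (h : Adm x y) : Fat (Submodule.span ℚ (Set.range y)) := fun n =>
  ⟨y n, Submodule.subset_span ⟨n, rfl⟩, (h n).2.2, (h n).1⟩

theorem grow {QQ : Set (List QD × Finset ℕ)}
    (hQ : ∀ q ∈ QQ, ∀ n, ∃ S' u, Succ n q.2 S' ∧ (q.1 ++ [u], S') ∈ QQ)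
    (q : List QD × Finset ℕ) (hq : q ∈ QQ) (n m : ℕ) :
    ∃ q' ∈ QQ, q.1 <+: q'.1 ∧ m ≤ q'.1.length ∧ Succ n q.2 q'.2 := by
  induction m with
  | zero => exact ⟨q, hq, List.prefix_rfl, Nat.zero_le _, subset_rfl, fun i hi => Or.inl hi⟩
  | succ m ih =>
    obtain ⟨q', h1, h2, h3, h4⟩ := ih
    obtain ⟨S', u, h5, h6⟩ := hQ q' h1 n
    refine ⟨_, h6, h2.trans (List.prefix_append _ _), by simp; omega, h4.1.trans h5.1,
      fun i hi => ?_⟩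
    rcases h5.2 i hi with hi | hi
    · exact h4.2 i hi
    · exact Or.inr hi

theorem win_of_limit {x y : ℕ → QD} {C : ℕ} (hx : ∀ i, x i ∈ Dn i) (N : ℕ)
    (QQ : Set (List QD × Finset ℕ)) (hq0 : ([], Finset.range N) ∈ QQ)
    (hleg : ∀ q ∈ QQ, b.Legal x y C q)
    (hQ : ∀ q ∈ QQ, ∀ n, ∃ S' u, Succ n q.2 S' ∧ (q.1 ++ [u], S') ∈ QQ) :
    ∃ N', b.Win C (Submodule.span ℚ (Set.range y)) (Submodule.span ℚ (Set.range x))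
      (∅, EN N') := by
  refine ⟨(Finset.range N).sup fun i => bd (x i), {p | ∃ q ∈ QQ, p.1 = Gam y q.1 ∧
    ∀ i ∈ q.2, x i ∈ Submodule.span ℚ (p.2 : Set QD)}, ?_, ([], Finset.range N), hq0, rfl, ?_⟩
  · rintro ⟨_, G⟩ ⟨q, hq, rfl, hG⟩
    simp only at hG
    refine ⟨(hleg q hq).2, fun n A hA => ?_⟩
    have hA' : ∀ a ∈ A, ∃ m, a ∈ Submodule.span ℚ (y '' Set.Iio m) := by
      intro a ha
      have := hA a ha
      rw [← Set.image_univ] at this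
      obtain ⟨m, hm⟩ := exists_bound this
      exact ⟨m, by simpa using hm⟩
    choose! mf hmf using hA'
    obtain ⟨q', hq', h1, h2, h3⟩ := grow hQ q hq n (A.sup mf)
    have hspan : ∀ i ∈ q'.2, x i ∈ Submodule.span ℚ (↑(G ∪ (q'.2 \ q.2).image x) : Set QD) := by
      intro i hi
      by_cases hiq : i ∈ q.2
      · exact Submodule.span_mono (Finset.coe_subset.2 Finset.subset_union_left) (hG i hiq)
      · exact Submodule.subset_span (Finset.mem_coe.2 (Finset.mem_union_right _
          (Finset.mem_image_of_mem _ (Finset.mem_sdiff.2 ⟨hi, hiq⟩))))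
    refine ⟨Gam y q'.1, (q'.2 \ q.2).image x, Gam_prefix y h1, ?_, ?_, ?_, q', hq', rfl, hspan⟩
    · intro d hd
      obtain ⟨i, hi, rfl⟩ := Finset.mem_image.1 hd
      rw [Finset.mem_sdiff] at hi
      exact ⟨Submodule.subset_span ⟨i, rfl⟩, Dn_anti ((h3.2 i hi.1).resolve_left hi.2) (hx i)⟩
    · intro p hp
      obtain ⟨i, hi, rfl⟩ := Finset.mem_image.1 hp
      rw [Finset.mem_range] at hi
      have hmem : q'.1.getD i 0 ∈ q'.1 := by
        rw [List.getD_eq_getElem _ _ hi]; exact List.getElem_mem hi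
      refine (Submodule.span_le.2 ?_) ((hleg q' hq').1 _ hmem)
      rintro _ ⟨j, hj, rfl⟩
      exact hspan j hj
    · intro a ha
      have hle : A.sup mf ≤ q'.1.length := h2
      have ham : mf a ≤ q'.1.length := (Finset.le_sup ha).trans hle
      have : Submodule.span ℚ (y '' Set.Iio (mf a)) ≤
          (Submodule.span ℚ (Gam y q'.1 : Set (QD × QD))).map (LinearMap.fst ℚ QD QD) := by
        rw [Submodule.span_le]
        rintro _ ⟨i, hi, rfl⟩
        refine ⟨(y i, q'.1.getD i 0), Submodule.subset_span (Finset.mem_coe.2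
          (Finset.mem_image.2 ⟨i, Finset.mem_range.2 (lt_of_lt_of_le hi ham), rfl⟩)), rfl⟩
      obtain ⟨⟨_, u⟩, hu, rfl⟩ := this (hmf a ha)
      exact ⟨u, hu⟩
  · intro i hi
    have hi' : bd (x i) ≤ (Finset.range N).sup fun i => bd (x i) :=
      Finset.le_sup (f := fun i => bd (x i)) hi
    rw [← Finsupp.sum_single (x i)]
    refine Submodule.sum_mem _ fun j hj => ?_
    have : Finsupp.single j (x i j) = (x i j) • (Finsupp.single j 1 : QD) := by simp
    rw [this]
    refine Submodule.smul_mem _ _ (Submodule.subset_span (Finset.mem_coe.2 (mem_EN.2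
      ⟨j, ?_, rfl⟩)))
    by_contra hlt
    exact (Finsupp.mem_support_iff.1 hj) (bd_spec (by omega))

theorem bounded {x : ℕ → QD} (hx : ∀ i, x i ∈ Dn i)
    (hno : ∀ C N, ∀ L ≤ Submodule.span ℚ (Set.range x), Fat L →
      ¬ b.Win C L (Submodule.span ℚ (Set.range x)) (∅, EN N)) :
    ∃ α < Ordinal.omega 1, ∀ C N y, Adm x y → ¬ b.Surv x y C α ([], Finset.range N) := by
  have h1 : ∀ p : ℕ × ℕ, ∃ α < Ordinal.omega 1, ∀ y, Adm x y →
      ¬ b.Surv x y p.1 α ([], Finset.range p.2) := by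
    rintro ⟨C, N⟩
    by_contra hcon
    push Not at hcon
    obtain ⟨y, QQ, hy, hq0, hleg, hQ⟩ := limit_exists ([], Finset.range N) hcon
    obtain ⟨N', hw⟩ := win_of_limit hx N QQ hq0 hleg hQ
    refine hno C N' _ ?_ hy.fat hw
    rw [Submodule.span_le]
    rintro _ ⟨i, rfl⟩
    exact (hy i).2.1
  choose f hf hfS using h1
  refine ⟨⨆ p, f p, Ordinal.iSup_lt_omega_one hf, fun C N y hy hS => ?_⟩
  exact hfS (C, N) y hy (hS.anti (Ordinal.le_iSup f (C, N)))

end BData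
end real
end Rosendal

end

section
open Filter Topology
namespace Rosendal

theorem exists_intervals (nf : ℕ → List QD × Finset ℕ → ℕ) (dec : ℕ → List QD) :
    ∃ a e : ℕ → ℕ, (∀ j, a j ≤ e j) ∧ (∀ j, a (j + 1) = e j + 1) ∧
      ∀ j, ∀ C ≤ j, ∀ c ≤ j, ∀ S ⊆ Finset.range (a j), nf C (dec c, S) ≤ e j := by
  let bb : ℕ → ℕ → ℕ := fun a j => max a ((Finset.range (j + 1)).sup fun C =>
    (Finset.range (j + 1)).sup fun c => (Finset.range a).powerset.sup fun S => nf C (dec c, S))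
  let a : ℕ → ℕ := fun j => Nat.rec 0 (fun j aj => bb aj j + 1) j
  refine ⟨a, fun j => bb (a j) j, fun j => le_max_left _ _, fun j => rfl, ?_⟩
  intro j C hC c hc S hS
  refine le_trans ?_ (le_max_right _ _)
  refine le_trans ?_ (Finset.le_sup (b := C) (by simp; omega))
  refine le_trans ?_ (Finset.le_sup (b := c) (by simp; omega))
  exact Finset.le_sup (f := fun S => nf C (dec c, S)) (Finset.mem_powerset.2 hS)

section real
variable {𝒲 : Type} [NormedAddCommGroup 𝒲] [NormedSpace ℝ 𝒲]

theorem treeRank_le {T : Set (List 𝒲)} {α : Ordinal.{0}} (D : List 𝒲 → Ordinal.{0} → Prop)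
    (hpre : ∀ l l' : List 𝒲, l' ∈ T → l <+: l' → l ∈ T) (h0 : D [] α)
    (hstep : ∀ l β w, D l β → l ∈ T → l ++ [w] ∈ T → ∃ β' < β, D (l ++ [w]) β') :
    treeRank T ≤ ((Order.succ α : Ordinal) : WithTop Ordinal) := by
  have h2 : ∀ r l β, D l β → r ≠ [] → l ++ r ∈ T → ∃ β' < β, D (l ++ r) β' := by
    intro r l β hD
    induction r using List.reverseRecOn with
    | nil => intro h; exact (h rfl).elim
    | append_singleton r w ih =>
      intro _ hT
      rw [← List.append_assoc] at hT ⊢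
      have hT' : l ++ r ∈ T := hpre _ _ hT (List.prefix_append _ _)
      by_cases hr : r = []
      · subst hr
        rw [List.append_nil] at *
        exact hstep l β w hD hT' hT
      · obtain ⟨β', h1, h2⟩ := ih hr hT'
        obtain ⟨β'', h3, h4⟩ := hstep _ β' w h2 hT' hT
        exact ⟨β'', h3.trans h1, h4⟩
  have h3 : ∀ β : Ordinal.{0}, ∀ s : T, D s.val β →
      ∃ h : Acc (fun t s : T => s.val <+: t.val ∧ s.val ≠ t.val) s, h.rank ≤ β := by
    intro β
    induction β using WellFoundedLT.induction with
    | ind β ih =>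
      intro s hs
      have key : ∀ t : T, s.val <+: t.val ∧ s.val ≠ t.val →
          ∃ h : Acc (fun t s : T => s.val <+: t.val ∧ s.val ≠ t.val) t, h.rank < β := by
        rintro ⟨t, ht⟩ ⟨hst, hne⟩
        simp only at hst hne
        obtain ⟨r, rfl⟩ := hst
        obtain ⟨β', hβ, hD⟩ := h2 r s.val β hs (by rintro rfl; simp at hne) ht
        obtain ⟨h, hh⟩ := ih β' hβ ⟨_, ht⟩ hD
        exact ⟨h, hh.trans_lt hβ⟩
      refine ⟨⟨_, fun t ht => (key t ht).1⟩, ?_⟩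
      rw [Acc.rank_eq]
      refine ciSup_le' fun t => ?_
      obtain ⟨h, hh⟩ := key t.1 t.2
      exact Order.succ_le_of_lt hh
  have h4 : ∀ s : T, ∃ h : Acc (fun t s : T => s.val <+: t.val ∧ s.val ≠ t.val) s,
      h.rank ≤ α := by
    rintro ⟨s, hs⟩
    by_cases hs0 : s = []
    · subst hs0; exact h3 α ⟨[], hs⟩ h0
    · obtain ⟨β, hβ, hD⟩ := h2 s [] α h0 hs0 (by simpa using hs)
      obtain ⟨h, hh⟩ := h3 β ⟨s, hs⟩ (by simpa using hD)
      exact ⟨h, hh.trans hβ.le⟩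
  have hwf : WellFounded (fun t s : T => s.val <+: t.val ∧ s.val ≠ t.val) := ⟨fun s => (h4 s).1⟩
  unfold treeRank
  rw [dif_pos hwf, WithTop.coe_le_coe]
  refine ciSup_le' fun s => ?_
  obtain ⟨h, hh⟩ := h4 s
  exact Order.succ_le_succ hh

theorem embIndex_le {x : ℕ → 𝒲} {Y : Set 𝒲} {α : Ordinal.{0}}
    (h : ∀ K : ℝ, 1 ≤ K → treeRank (embTree x Y K) ≤ (α : WithTop Ordinal)) :
    embIndex x Y ≤ (α : WithTop Ordinal) := by
  unfold embIndex
  rw [if_neg, WithTop.coe_le_coe]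
  · refine csSup_le' ?_
    rintro o ⟨K, hK, ho⟩
    have := h K hK
    rw [← ho, WithTop.coe_le_coe] at this
    exact this
  · rintro ⟨K, hK, ho⟩
    have := h K hK
    rw [ho] at this
    simp at this

theorem embTree_prefix {x : ℕ → 𝒲} {Y : Set 𝒲} {K : ℝ} {l l' : List 𝒲}
    (h : l' ∈ embTree x Y K) (hl : l <+: l') : l ∈ embTree x Y K := by
  obtain ⟨h1, h2⟩ := h
  refine ⟨fun v hv => h1 v (hl.subset hv), fun a => ?_⟩
  have h3 := h2 (fun i => if i < l.length then a i else 0)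
  have hle := hl.length_le
  have e1 : ∀ f : ℕ → 𝒲, ∑ i ∈ Finset.range l'.length, (if i < l.length then a i else 0) • f i =
      ∑ i ∈ Finset.range l.length, a i • f i := by
    intro f
    rw [← Finset.sum_subset (Finset.range_mono hle)]
    · refine Finset.sum_congr rfl fun i hi => ?_
      rw [if_pos (Finset.mem_range.1 hi)]
    · intro i _ hi
      rw [if_neg (by simpa using hi), zero_smul]
  have e2 : ∑ i ∈ Finset.range l.length, a i • l'.getD i 0 =
      ∑ i ∈ Finset.range l.length, a i • l.getD i 0 := by
    refine Finset.sum_congr rfl fun i hi => ?_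
    obtain ⟨r, rfl⟩ := hl
    rw [Finset.mem_range] at hi
    simp [List.getD_eq_getElem?_getD, List.getElem?_append_left hi]
  simp only [e1, e2] at h3
  exact h3

namespace BData
variable {b : BData 𝒲}

theorem isBlockSeq_ι {x : ℕ → QD} (hx : QBlock x) : IsBlockSeq b.e (fun i => b.ι (x i)) := by
  refine ⟨fun n => b.ι_ne (hx.ne n), fun n => (x n).support, fun n => ⟨fun i => (x n i : ℝ), rfl⟩,
    fun n i hi j hj => ?_⟩
  by_contra hlt
  have h1 : i < bd (x n) := by
    by_contra h
    exact (Finsupp.mem_support_iff.1 hi) (bd_spec (by omega))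
  exact (Finsupp.mem_support_iff.1 hj) (hx.succ n j (by omega))

theorem exists_n (x y : ℕ → QD) (C : ℕ) (q : List QD × Finset ℕ) :
    ∃ n, ∀ β, ¬ b.Surv x y C β q → b.Legal x y C q → ∀ S' u, Succ n q.2 S' →
      ∃ β' < β, ¬ b.Surv x y C β' (q.1 ++ [u], S') := by
  by_cases h : (∃ β, ¬ b.Surv x y C β q) ∧ b.Legal x y C q
  · obtain ⟨hne, hleg⟩ := h
    obtain ⟨β0, h0, hmin⟩ := WellFounded.has_min (wellFounded_lt (α := Ordinal.{0}))
      {β | ¬ b.Surv x y C β q} hne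
    have h1 : ¬ b.Surv x y C β0 q := h0
    rw [Surv_iff] at h1
    push Not at h1
    obtain ⟨γ, hγ, n, hn⟩ := h1 hleg
    refine ⟨n, fun β hβ _ S' u hS => ⟨γ, hγ.trans_le (not_lt.1 (hmin β hβ)), hn S' u hS⟩⟩
  · exact ⟨0, fun β hβ hl => (h ⟨⟨β, hβ⟩, hl⟩).elim⟩

theorem cond_of_near {Y : ℕ → 𝒲} {m : ℕ → ℕ} {y : ℕ → QD} (hY : b.Blk Y m)
    (hYy : ∀ (a : ℕ → ℝ) n,
      ‖∑ i ∈ Finset.range n, a i • Y i‖ ≤ 2 * ‖∑ i ∈ Finset.range n, a i • b.ι (y i)‖ ∧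
      ‖∑ i ∈ Finset.range n, a i • b.ι (y i)‖ ≤ 2 * ‖∑ i ∈ Finset.range n, a i • Y i‖)
    {K : ℝ} (hK : 1 ≤ K) {C : ℕ} (hC : 4 * K + 2 ≤ C) {l : List 𝒲} {v : List QD}
    (hlen : v.length = l.length) (hl : SeqEquiv K l.length (fun i => l.getD i 0) Y)
    (happ : ∀ i, ‖l.getD i 0 - b.ι (v.getD i 0)‖ ≤
      (1 / (2 * K)) / (2 * b.B) * ‖Y i‖ * (1 / 2) ^ (i + 1)) :
    b.Cond C (Gam y v) := by
  intro w hw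
  have himg : b.ι2 '' (Gam y v : Set (QD × QD)) =
      (fun i => b.ι2 (y i, v.getD i 0)) '' Set.Iio v.length := by
    unfold Gam
    rw [Finset.coe_image, Set.image_image, Finset.coe_range]
  rw [himg] at hw
  obtain ⟨a, rfl⟩ := mem_span_Iio_iff _ _ _ hw
  have e1 : (∑ i ∈ Finset.range v.length, a i • b.ι2 (y i, v.getD i 0)).1 =
      ∑ i ∈ Finset.range v.length, a i • b.ι (y i) := by
    simp [ι2, Prod.fst_sum]
  have e2 : (∑ i ∈ Finset.range v.length, a i • b.ι2 (y i, v.getD i 0)).2 =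
      ∑ i ∈ Finset.range v.length, a i • b.ι (v.getD i 0) := by
    simp [ι2, Prod.snd_sum]
  rw [e1, e2, hlen]
  obtain ⟨h1, h2⟩ := hl a
  obtain ⟨h3, h4⟩ := hYy a l.length
  have h5 := hY.perturb b (y' := fun i => Y i - (l.getD i 0 - b.ι (v.getD i 0))) (1 / (2 * K))
    (by positivity) (fun k => by rw [sub_sub_cancel]; exact happ k) a l.length
  have e3 : ∑ i ∈ Finset.range l.length, a i • Y i -
      ∑ i ∈ Finset.range l.length, a i • (Y i - (l.getD i 0 - b.ι (v.getD i 0))) =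
      ∑ i ∈ Finset.range l.length, a i • l.getD i 0 -
        ∑ i ∈ Finset.range l.length, a i • b.ι (v.getD i 0) := by
    rw [← Finset.sum_sub_distrib, ← Finset.sum_sub_distrib]
    refine Finset.sum_congr rfl fun i _ => ?_
    rw [smul_sub, smul_sub]; abel
  rw [e3] at h5
  simp only at h1 h2
  generalize ∑ i ∈ Finset.range l.length, a i • l.getD i 0 = L at *
  generalize ∑ i ∈ Finset.range l.length, a i • b.ι (v.getD i 0) = V at *
  generalize ∑ i ∈ Finset.range l.length, a i • Y i = A at *
  generalize ∑ i ∈ Finset.range l.length, a i • b.ι (y i) = W at *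
  have hK0 : 0 < K := by linarith
  have h6 : ‖V‖ ≤ ‖L‖ + 1 / (2 * K) * ‖A‖ := by
    have := norm_sub_norm_le V L
    rw [norm_sub_rev] at this
    linarith
  have h7 : ‖L‖ ≤ ‖V‖ + 1 / (2 * K) * ‖A‖ := by
    have := norm_sub_norm_le L V
    linarith
  have h8 : ‖L‖ ≤ K * ‖A‖ := by
    rw [div_mul_eq_mul_div, one_mul, div_le_iff₀ hK0] at h1; linarith
  have h9 : ‖A‖ ≤ 2 * K * ‖V‖ := by
    have : K * ‖L‖ ≤ K * (‖V‖ + 1 / (2 * K) * ‖A‖) := by gcongr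
    have e : K * (‖V‖ + 1 / (2 * K) * ‖A‖) = K * ‖V‖ + ‖A‖ / 2 := by field_simp
    linarith
  have h10 : 1 / (2 * K) * ‖A‖ ≤ ‖A‖ := by
    have : 1 / (2 * K) ≤ 1 := by rw [div_le_one (by positivity)]; linarith
    nlinarith [norm_nonneg A]
  constructor
  · calc ‖W‖ ≤ 2 * (2 * K * ‖V‖) := by linarith
      _ = (4 * K) * ‖V‖ := by ring
      _ ≤ C * ‖V‖ := by gcongr; linarith
  · calc ‖V‖ ≤ (K + 1) * ‖A‖ := by linarith
      _ ≤ (K + 1) * (2 * ‖W‖) := by gcongr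
      _ = (2 * K + 2) * ‖W‖ := by ring
      _ ≤ C * ‖W‖ := by gcongr; linarith

/-- rational approximation of a block sequence -/
theorem approx_block {x : ℕ → QD} (hx : QBlock x) {Y : ℕ → 𝒲}
    (hY : IsBlockSeq (fun i => b.ι (x i)) Y) :
    ∃ m, b.Blk Y m ∧ ∃ y, Adm x y ∧ ∀ (a : ℕ → ℝ) n,
      ‖∑ i ∈ Finset.range n, a i • Y i‖ ≤ 2 * ‖∑ i ∈ Finset.range n, a i • b.ι (y i)‖ ∧
      ‖∑ i ∈ Finset.range n, a i • b.ι (y i)‖ ≤ 2 * ‖∑ i ∈ Finset.range n, a i • Y i‖ := by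
  obtain ⟨hne, D, hD, hlt⟩ := hY
  have hDne : ∀ n, (D n).Nonempty := by
    intro n
    by_contra h
    rw [Finset.not_nonempty_iff_eq_empty] at h
    obtain ⟨a, ha⟩ := hD n
    rw [h, Finset.sum_empty] at ha
    exact hne n ha
  let M : ℕ → ℕ := fun k => Nat.casesOn k 0 (fun k => (D k).sup id + 1)
  have hMs : ∀ k, ∀ i ∈ D k, i < M (k + 1) := fun k i hi =>
    Nat.lt_succ_of_le (Finset.le_sup (f := id) hi)
  have hMl : ∀ k, ∀ i ∈ D k, M k ≤ i := by
    intro k i hi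
    cases k with
    | zero => exact Nat.zero_le _
    | succ k =>
      show (D k).sup id + 1 ≤ i
      obtain ⟨j, hj, hj'⟩ := Finset.exists_mem_eq_sup (D k) (hDne k) id
      rw [hj']
      exact hlt k j hj i hi
  have hMm : StrictMono M := strictMono_nat_of_lt_succ fun k => by
    obtain ⟨i, hi⟩ := hDne k
    exact (hMl k i hi).trans_lt (hMs k i hi)
  have hB := b.hB
  refine ⟨fun k => bdry x (M k), ?_, ?_⟩
  · intro k j
    obtain ⟨a, ha⟩ := hD j
    rw [ha, map_sum]
    simp only [map_smul]
    split_ifs with hjk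
    · refine Finset.sum_congr rfl fun i hi => ?_
      rw [b.Blk_ι hx (M k) i, if_pos]
      exact (hMs j i hi).trans_le (hMm.monotone hjk)
    · refine Finset.sum_eq_zero fun i hi => ?_
      rw [b.Blk_ι hx (M k) i, if_neg, smul_zero]
      have := hMl j i hi
      have := hMm.monotone (not_lt.1 hjk)
      omega
  have hBlk : b.Blk Y (fun k => bdry x (M k)) := by
    intro k j
    obtain ⟨a, ha⟩ := hD j
    rw [ha, map_sum]
    simp only [map_smul]
    split_ifs with hjk
    · refine Finset.sum_congr rfl fun i hi => ?_
      rw [b.Blk_ι hx (M k) i, if_pos]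
      exact (hMs j i hi).trans_le (hMm.monotone hjk)
    · refine Finset.sum_eq_zero fun i hi => ?_
      rw [b.Blk_ι hx (M k) i, if_neg, smul_zero]
      have := hMl j i hi
      have := hMm.monotone (not_lt.1 hjk)
      omega
  have hpos : ∀ n, 0 < ‖Y n‖ := fun n => norm_pos_iff.2 (hne n)
  have hap : ∀ n, ∃ d ∈ Submodule.span ℚ (x '' (D n : Set ℕ)),
      ‖Y n - b.ι d‖ < (1 / 2) / (2 * b.B) * ‖Y n‖ * (1 / 2) ^ (n + 1) := by
    intro n
    have := hpos n
    refine b.dense_approx ?_ (by positivity)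
    refine Submodule.le_topologicalClosure _ ?_
    obtain ⟨a, ha⟩ := hD n
    rw [ha]
    exact Submodule.sum_mem _ fun i hi => Submodule.smul_mem _ _
      (Submodule.subset_span ⟨_, ⟨i, hi, rfl⟩, rfl⟩)
  choose y hy hYy using hap
  have hper := fun a n => hBlk.perturb b (y' := fun i => b.ι (y i)) (1 / 2) (by norm_num)
    (fun k => (hYy k).le) a n
  refine ⟨y, fun n => ⟨?_, Submodule.span_mono (Set.image_subset_range _ _) (hy n), ?_⟩, ?_⟩
  · intro h0
    have h1 := hYy n
    rw [h0, ι_zero, sub_zero] at h1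
    have h2 : (1 / 2 : ℝ) ^ (n + 1) ≤ 1 := pow_le_one₀ (by norm_num) (by norm_num)
    have h3 : (1 / 2) / (2 * b.B) ≤ 1 := by rw [div_le_one (by positivity)]; linarith
    have h4 : (1 / 2) / (2 * b.B) * ‖Y n‖ * (1 / 2) ^ (n + 1) ≤ 1 * ‖Y n‖ * 1 := by gcongr
    linarith
  · refine (Submodule.span_le.2 ?_) (hy n)
    rintro _ ⟨i, hi, rfl⟩
    exact Dn_anti (hMm.le_apply.trans (hMl n i hi)) (hx.mem_Dn_self i)
  · intro a n
    have h := hper a n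
    have h1 := norm_sub_norm_le (∑ i ∈ Finset.range n, a i • Y i)
      (∑ i ∈ Finset.range n, a i • b.ι (y i))
    have h2 := norm_sub_norm_le (∑ i ∈ Finset.range n, a i • b.ι (y i))
      (∑ i ∈ Finset.range n, a i • Y i)
    rw [norm_sub_rev] at h2
    have := norm_nonneg (∑ i ∈ Finset.range n, a i • Y i)
    constructor <;> linarith

theorem tight {x : ℕ → QD} (hx : QBlock x) {α : Ordinal.{0}}
    (hα : ∀ C N y, Adm x y → ¬ b.Surv x y C α ([], Finset.range N)) :
    IsAlphaTight (fun i => b.ι (x i)) (Order.succ α) := by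
  intro Y hYb
  have hne := hYb.1
  obtain ⟨m, hBlk, y, hadm, hYy⟩ := approx_block hx hYb
  choose nf hnf using fun C q => exists_n (b := b) x y C q
  obtain ⟨dec, hdec⟩ := exists_surjective_nat (List QD)
  obtain ⟨a, e, hae, has, hbd⟩ := exists_intervals nf dec
  have ham : StrictMono a := strictMono_nat_of_lt_succ fun j => by
    rw [has]; exact Nat.lt_succ_of_le (hae j)
  have hB := b.hB
  refine ⟨fun j => Finset.Icc (a j) (e j), ⟨fun j => ⟨a j, e j, hae j, rfl⟩, ?_⟩, ?_⟩
  · intro j i hi k hk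
    rw [Finset.mem_Icc] at hi hk
    rw [has] at hk
    omega
  intro A hA
  refine embIndex_le fun K hK => ?_
  have hK0 : 0 < K := by linarith
  obtain ⟨C, hC⟩ := exists_nat_ge (4 * K + 2)
  have hR : residualSpace (fun i => b.ι (x i)) (fun j => Finset.Icc (a j) (e j)) A =
      closedSpan (b.ι '' (x '' {i | ∀ k ∈ A, i ∉ Finset.Icc (a k) (e k)})) := by
    unfold residualSpace
    congr 1
    ext v
    constructor
    · rintro ⟨n, h1, rfl⟩
      exact ⟨_, ⟨n, h1, rfl⟩, rfl⟩
    · rintro ⟨_, ⟨n, h1, rfl⟩, rfl⟩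
      exact ⟨n, h1, rfl⟩
  rw [hR]
  refine treeRank_le (fun l β => ∃ j ∈ A, ∃ (S : Finset ℕ) (v : List QD), C ≤ j ∧
    (∃ c ≤ j, dec c = v) ∧ S ⊆ Finset.range (a j) ∧
    (∀ i < a j, (∀ k ∈ A, i ∉ Finset.Icc (a k) (e k)) → i ∈ S) ∧ v.length = l.length ∧
    (∀ i, ‖l.getD i 0 - b.ι (v.getD i 0)‖ ≤
      (1 / (2 * K)) / (2 * b.B) * ‖Y i‖ * (1 / 2) ^ (i + 1)) ∧
    (∀ u ∈ v, u ∈ Submodule.span ℚ (x '' (S : Set ℕ))) ∧ ¬ b.Surv x y C β (v, S))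
    (fun l l' h h' => embTree_prefix h h') ?_ ?_
  · obtain ⟨c, hc⟩ := hdec []
    obtain ⟨j, hj, hj'⟩ := hA.exists_gt (max C c)
    refine ⟨j, hj, Finset.range (a j), [], ?_, ⟨c, ?_, hc⟩, subset_rfl,
      fun i hi _ => Finset.mem_range.2 hi, rfl, ?_, by simp, hα _ _ _ hadm⟩
    · exact (le_max_left _ _).trans hj'.le
    · exact (le_max_right _ _).trans hj'.le
    · intro i
      simp only [List.getD_nil, ι_zero, sub_zero, norm_zero]
      positivity
  · rintro l β w ⟨j, hj, S, v, hCj, ⟨c, hcj, hcv⟩, hS, hall, hlen, happ, hv, hsurv⟩ hl hlw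
    have hleg : b.Legal x y C (v, S) := ⟨hv, cond_of_near hBlk hYy hK hC hlen hl.2 happ⟩
    have hn : nf C (v, S) ≤ e j := by rw [← hcv]; exact hbd j C hCj c hcj S hS
    have hw := hlw.1 w (by simp)
    have hYp : 0 < ‖Y l.length‖ := norm_pos_iff.2 (hne _)
    obtain ⟨u, hu, hwu⟩ := b.dense_approx hw
      (δ := (1 / (2 * K)) / (2 * b.B) * ‖Y l.length‖ * (1 / 2) ^ (l.length + 1)) (by positivity)
    obtain ⟨M, hM⟩ := exists_bound hu
    obtain ⟨c', hc'⟩ := hdec (v ++ [u])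
    obtain ⟨j', hj', hjj⟩ := hA.exists_gt (max (max j M) c')
    have hj1 : j < j' := lt_of_le_of_lt ((le_max_left _ _).trans (le_max_left _ _)) hjj
    have hj2 : M < j' := lt_of_le_of_lt ((le_max_right _ _).trans (le_max_left _ _)) hjj
    have hj3 : c' < j' := lt_of_le_of_lt (le_max_right _ _) hjj
    have haj : a (j + 1) ≤ a j' := ham.monotone hj1
    have hMa : M ≤ a j' := hj2.le.trans ham.le_apply
    rw [has] at haj
    have haej := hae j
    set S' := S ∪ Finset.Ico (e j + 1) (a j') with hS'
    have hall' : ∀ i < a j', (∀ k ∈ A, i ∉ Finset.Icc (a k) (e k)) → i ∈ S' := by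
      intro i hi hal
      rw [hS', Finset.mem_union, Finset.mem_Ico]
      by_cases h1 : i < a j
      · exact Or.inl (hall i h1 hal)
      · have := hal j hj
        rw [Finset.mem_Icc] at this
        right; omega
    obtain ⟨β', hβ, hsv⟩ := hnf C (v, S) β hsurv hleg S' u ⟨Finset.subset_union_left, by
      intro i hi
      rw [hS', Finset.mem_union, Finset.mem_Ico] at hi
      rcases hi with hi | hi
      · exact Or.inl hi
      · right; omega⟩
    refine ⟨β', hβ, j', hj', S', v ++ [u], by omega, ⟨c', hj3.le, hc'⟩, ?_, hall', by simp [hlen],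
      ?_, ?_, hsv⟩
    · intro i hi
      rw [hS', Finset.mem_union, Finset.mem_Ico] at hi
      rw [Finset.mem_range]
      rcases hi with hi | hi
      · have := Finset.mem_range.1 (hS hi); omega
      · omega
    · intro i
      rcases lt_trichotomy i l.length with hi | rfl | hi
      · have hi' : i < v.length := by omega
        have := happ i
        simpa only [List.getD_eq_getElem?_getD, List.getElem?_append_left hi,
          List.getElem?_append_left hi'] using this
      · have e1 : (l ++ [w]).getD l.length 0 = w := by simp
        have e2 : (v ++ [u]).getD l.length 0 = u := by rw [← hlen]; simp
        rw [e1, e2]; exact hwu.le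
      · rw [List.getD_eq_default _ _ (by simp; omega), List.getD_eq_default _ _ (by simp; omega),
          ι_zero, sub_zero, norm_zero]
        positivity
    · intro d hd
      rw [List.mem_append, List.mem_singleton] at hd
      rcases hd with hd | rfl
      · exact Submodule.span_mono (Set.image_mono (Finset.coe_subset.2 Finset.subset_union_left))
          (hv d hd)
      · refine Submodule.span_mono (Set.image_mono ?_) hM
        rintro i ⟨h1, h2⟩
        exact hall' i (lt_of_lt_of_le h2 hMa) h1

end BData
end real

theorem main_aux
    (𝒲 : Type) [NormedAddCommGroup 𝒲] [NormedSpace ℝ 𝒲] [CompleteSpace 𝒲]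
    (e : ℕ → 𝒲) (he : IsSchauderBasis e)
    (hnomin : ∀ X : Submodule ℝ 𝒲, IsClosed (X : Set 𝒲) → ¬FiniteDimensional ℝ X →
      ¬IsMinimalSpace X) :
    ∃ x : ℕ → 𝒲, IsBlockSeq e x ∧
      ∃ α : Ordinal, α < (Cardinal.aleph 1).ord ∧ IsAlphaTight x α := by
  obtain ⟨b, rfl⟩ := exists_bdata e he
  by_cases h : ∀ M, Fat M → ∃ C N, b.Star C N M
  · obtain ⟨X, h1, h2, h3⟩ := BData.partII h
    exact (hnomin X h1 h2 h3).elim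
  push Not at h
  obtain ⟨X, hX, hstar⟩ := h
  obtain ⟨x, hx, hxX⟩ := exists_block (fun _ => X) (fun _ => hX) (fun _ => 0)
  have hle : Submodule.span ℚ (Set.range x) ≤ X := by
    rw [Submodule.span_le]
    rintro _ ⟨i, rfl⟩
    exact (hxX i).1
  obtain ⟨α, hα, hS⟩ := BData.bounded (b := b) (x := x) hx.mem_Dn_self
    (fun C N L hL hLf hw => hstar C N ⟨L, hL.trans hle, hLf,
      hw.mono le_rfl le_rfl ⟨0, inf_le_left.trans hle⟩ subset_rfl⟩)
  refine ⟨fun i => b.ι (x i), BData.isBlockSeq_ι hx, Order.succ α, ?_, BData.tight hx hS⟩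
  rw [Cardinal.ord_aleph]
  exact (Cardinal.isSuccLimit_omega 1).succ_lt hα

end Rosendal

end


namespace Rosendal

/-- If `𝒲` is a Banach space with a Schauder basis `(e n)` such that no
infinite-dimensional closed subspace of `𝒲` is minimal, then there is a block subspace
`𝒳 = [x n]` of `𝒲` and a countable ordinal `α` such that `[x n]` is `α`-tight. -/
theorem exists_alpha_tight_block_subspace
    (𝒲 : Type) [NormedAddCommGroup 𝒲] [NormedSpace ℝ 𝒲] [CompleteSpace 𝒲]
    (e : ℕ → 𝒲) (he : IsSchauderBasis e)
    (hnomin : ∀ X : Submodule ℝ 𝒲, IsClosed (X : Set 𝒲) → ¬FiniteDimensional ℝ X →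
      ¬IsMinimalSpace X) :
    ∃ x : ℕ → 𝒲, IsBlockSeq e x ∧
      ∃ α : Ordinal, α < (Cardinal.aleph 1).ord ∧ IsAlphaTight x α :=
  main_aux 𝒲 e he hnomin

end Rosendal
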